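/- arXiv:1904.01407 — 3 statements merged into one kernel-verified Lean document; each statement's English description precedes it below -/
import Mathlib

section
/- The formulas x ↔ (□x)², □(x ↔ (□x)²), and ¬◇□0 do NOT locally entail ¬x ∨ x over transitive Łukasiewicz Kripke models: there exist a transitive safe [0,1]_Ł-Kripke model M and a world v with e(v, x ↔ (□x)²) = e(v, □(x ↔ (□x)²)) = e(v, ¬◇□0) = 1 and e(v, ¬x ∨ x) < 1. In particular, the model with W = ℕ, R = {⟨n,m⟩ : n < m}, e(0,x) = 0.1 and e(n+1,x) = (e(n,x)+1)/2 witnesses this at world 0. -/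
/-!
On the frame `(ℕ, <)` let every variable take the value `1 - 0.9 / 2 ^ n` at world `n`. This sequence
increases, so `□x` at `n` is its value at the immediate successor, `1 - 0.45 / 2 ^ n`, and the
Łukasiewicz square of that number is exactly `1 - 0.9 / 2 ^ n`. Hence `x ↔ (□x)²` has value `1` at
every world. There are no dead ends, so `□0`, and with it `◇□0`, is constantly `0`. At world `0`,
however, `x` has the non-Boolean value `0.1`, so `¬x ∨ x` has value `0.9`.
-/


/-- Modal formulas over a set `V` of propositional variables. -/
inductive MFormula (V : Type) : Type
  | var : V → MFormula V
  | fZero : MFormula V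
  | fOne : MFormula V
  | fAnd : MFormula V → MFormula V → MFormula V
  | fOr : MFormula V → MFormula V → MFormula V
  | fMul : MFormula V → MFormula V → MFormula V
  | fImp : MFormula V → MFormula V → MFormula V
  | fBox : MFormula V → MFormula V
  | fDia : MFormula V → MFormula V
  deriving DecidableEq

namespace MFormula

variable {V : Type}

def fNeg (φ : MFormula V) : MFormula V := .fImp φ .fZero

def fIff (φ ψ : MFormula V) : MFormula V := .fMul (.fImp φ ψ) (.fImp ψ φ)

end MFormula

/-- A (safe) Kripke model over the standard MV algebra `[0,1]_Ł`: all values lie in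
`[0,1] ⊆ ℝ`, the propositional connectives are computed world-wise by the Łukasiewicz
operations, and `□`/`◇` are the infimum/supremum of the values at accessible worlds
(`1`/`0` when there are none); over `[0,1]` these always exist, so every such model is
safe. -/
structure LukModel (V : Type) where
  W : Type
  nonempty : Nonempty W
  R : W → W → Prop
  e : W → MFormula V → ℝ
  mem01 : ∀ v φ, e v φ ∈ Set.Icc (0 : ℝ) 1
  e_zero : ∀ v, e v .fZero = 0
  e_one : ∀ v, e v .fOne = 1
  e_and : ∀ v φ ψ, e v (.fAnd φ ψ) = min (e v φ) (e v ψ)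
  e_or : ∀ v φ ψ, e v (.fOr φ ψ) = max (e v φ) (e v ψ)
  e_mul : ∀ v φ ψ, e v (.fMul φ ψ) = max 0 (e v φ + e v ψ - 1)
  e_imp : ∀ v φ ψ, e v (.fImp φ ψ) = min 1 (1 - e v φ + e v ψ)
  e_box : ∀ v φ, IsGLB (insert (1 : ℝ) {a | ∃ w, R v w ∧ e w φ = a}) (e v (.fBox φ))
  e_dia : ∀ v φ, IsLUB (insert (0 : ℝ) {a | ∃ w, R v w ∧ e w φ = a}) (e v (.fDia φ))

namespace LukModel

variable {V : Type}

/-- The accessibility relation is transitive. -/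
def IsTrans (M : LukModel V) : Prop := ∀ a b c : M.W, M.R a b → M.R b c → M.R a c

/-- A model is witnessed if the value of every `□`- and `◇`-formula at every world is
attained at some accessible world. -/
def Witnessed (M : LukModel V) : Prop :=
  ∀ (v : M.W) (φ : MFormula V),
    (∃ w, M.R v w ∧ M.e v (.fBox φ) = M.e w φ) ∧
    (∃ w, M.R v w ∧ M.e v (.fDia φ) = M.e w φ)

end LukModel

namespace LukCounter

/-- The truth value of a formula at a world of `(ℕ, <)`, with every variable equal to
`1 - 0.9 / 2 ^ n` at `n`. The elements `1` and `0` inserted under `sInf` and `sSup` match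
the modal clauses of `LukModel` and keep the sets nonempty. -/
noncomputable def val : MFormula ℕ → ℕ → ℝ
  | .var _, n => 1 - 0.9 / 2 ^ n
  | .fZero, _ => 0
  | .fOne, _ => 1
  | .fAnd φ ψ, n => min (val φ n) (val ψ n)
  | .fOr φ ψ, n => max (val φ n) (val ψ n)
  | .fMul φ ψ, n => max 0 (val φ n + val ψ n - 1)
  | .fImp φ ψ, n => min 1 (1 - val φ n + val ψ n)
  | .fBox φ, n => sInf (insert (1 : ℝ) {a | ∃ m, n < m ∧ val φ m = a})
  | .fDia φ, n => sSup (insert (0 : ℝ) {a | ∃ m, n < m ∧ val φ m = a})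

theorem isGLB_of_mem01 {f : ℕ → ℝ} (hf : ∀ m, f m ∈ Set.Icc (0 : ℝ) 1) (n : ℕ) :
    IsGLB (insert (1 : ℝ) {a | ∃ m, n < m ∧ f m = a})
      (sInf (insert (1 : ℝ) {a | ∃ m, n < m ∧ f m = a})) := by
  refine isGLB_csInf (Set.insert_nonempty _ _) ⟨0, ?_⟩
  rintro a (rfl | ⟨m, -, rfl⟩)
  exacts [zero_le_one, (hf m).1]

theorem isLUB_of_mem01 {f : ℕ → ℝ} (hf : ∀ m, f m ∈ Set.Icc (0 : ℝ) 1) (n : ℕ) :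
    IsLUB (insert (0 : ℝ) {a | ∃ m, n < m ∧ f m = a})
      (sSup (insert (0 : ℝ) {a | ∃ m, n < m ∧ f m = a})) := by
  refine isLUB_csSup (Set.insert_nonempty _ _) ⟨1, ?_⟩
  rintro a (rfl | ⟨m, -, rfl⟩)
  exacts [zero_le_one, (hf m).2]

theorem val_mem01 (φ : MFormula ℕ) : ∀ n, val φ n ∈ Set.Icc (0 : ℝ) 1 := by
  induction φ with
  | var k =>
    intro n
    have h1 : (1 : ℝ) ≤ 2 ^ n := one_le_pow₀ one_le_two
    have h2 : (0.9 : ℝ) / 2 ^ n ≤ 1 := by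
      rw [div_le_one (by positivity)]; linarith
    have h3 : (0 : ℝ) ≤ 0.9 / 2 ^ n := by positivity
    exact ⟨by simp only [val]; linarith, by simp only [val]; linarith⟩
  | fZero => intro n; simp [val]
  | fOne => intro n; simp [val]
  | fAnd φ ψ h1 h2 =>
    intro n
    exact ⟨le_min (h1 n).1 (h2 n).1, (min_le_left _ _).trans (h1 n).2⟩
  | fOr φ ψ h1 h2 =>
    intro n
    exact ⟨(h1 n).1.trans (le_max_left _ _), max_le (h1 n).2 (h2 n).2⟩
  | fMul φ ψ h1 h2 =>
    intro n
    exact ⟨le_max_left _ _, max_le zero_le_one (by linarith [(h1 n).2, (h2 n).2])⟩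
  | fImp φ ψ h1 h2 =>
    intro n
    exact ⟨le_min zero_le_one (by linarith [(h1 n).2, (h2 n).1]), min_le_left _ _⟩
  | fBox φ h =>
    intro n
    have H := isGLB_of_mem01 h n
    refine ⟨H.2 ?_, H.1 (Set.mem_insert _ _)⟩
    rintro a (rfl | ⟨m, -, rfl⟩)
    exacts [zero_le_one, (h m).1]
  | fDia φ h =>
    intro n
    have H := isLUB_of_mem01 h n
    refine ⟨H.1 (Set.mem_insert _ _), H.2 ?_⟩
    rintro a (rfl | ⟨m, -, rfl⟩)
    exacts [zero_le_one, (h m).2]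

/-- The Kripke model on `(ℕ, <)` with valuation `val`. -/
noncomputable def model : LukModel ℕ where
  W := ℕ
  nonempty := ⟨0⟩
  R := fun a b => a < b
  e := fun n φ => val φ n
  mem01 := fun n φ => val_mem01 φ n
  e_zero := fun _ => rfl
  e_one := fun _ => rfl
  e_and := fun _ _ _ => rfl
  e_or := fun _ _ _ => rfl
  e_mul := fun _ _ _ => rfl
  e_imp := fun _ _ _ => rfl
  e_box := fun n φ => isGLB_of_mem01 (val_mem01 φ) n
  e_dia := fun n φ => isLUB_of_mem01 (val_mem01 φ) n

/-- The infimum defining `□x` is attained at the immediate successor, as `x` increases. -/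
theorem val_box_var (k n : ℕ) : val (.fBox (.var k)) n = 1 - 0.9 / 2 ^ (n + 1) := by
  refine (isGLB_of_mem01 (val_mem01 (.var k)) n).unique (IsLeast.isGLB ⟨?_, ?_⟩)
  · exact Or.inr ⟨n + 1, Nat.lt_succ_self n, rfl⟩
  · rintro a (rfl | ⟨m, hm, rfl⟩)
    · have : (0 : ℝ) ≤ 0.9 / 2 ^ (n + 1) := by positivity
      linarith
    · have : (0.9 : ℝ) / 2 ^ m ≤ 0.9 / 2 ^ (n + 1) := by
        gcongr
        · norm_num
        · exact hm
      simp only [val]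
      linarith

theorem val_iff_of_eq {φ ψ : MFormula ℕ} {n : ℕ} (h : val φ n = val ψ n) :
    val (MFormula.fIff φ ψ) n = 1 := by
  simp [MFormula.fIff, val, h]

theorem val_box_of_eq_one {φ : MFormula ℕ} (h : ∀ m, val φ m = 1) (n : ℕ) :
    val (.fBox φ) n = 1 := by
  refine (isGLB_of_mem01 (val_mem01 φ) n).unique (IsLeast.isGLB ⟨Set.mem_insert _ _, ?_⟩)
  rintro a (rfl | ⟨m, -, rfl⟩)
  exacts [le_rfl, (h m).ge]

theorem val_dia_of_eq_zero {φ : MFormula ℕ} (h : ∀ m, val φ m = 0) (n : ℕ) :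
    val (.fDia φ) n = 0 := by
  refine (isLUB_of_mem01 (val_mem01 φ) n).unique (IsGreatest.isLUB ⟨Set.mem_insert _ _, ?_⟩)
  rintro a (rfl | ⟨m, -, rfl⟩)
  exacts [le_rfl, (h m).le]

/-- Every world has a successor, so `□0` is nowhere vacuously true. -/
theorem val_box_zero (n : ℕ) : val (.fBox .fZero) n = 0 :=
  le_antisymm
    ((isGLB_of_mem01 (val_mem01 .fZero) n).1 (Or.inr ⟨n + 1, Nat.lt_succ_self n, rfl⟩))
    (val_mem01 _ n).1

/-- The first premise holds at every world: the square of `□x` is `x`. -/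
theorem val_premise (n : ℕ) :
    val (MFormula.fIff (.var 0) (.fMul (.fBox (.var 0)) (.fBox (.var 0)))) n = 1 := by
  apply val_iff_of_eq
  have h0 := (val_mem01 (.var 0) n).1
  have hsq : val (.fBox (.var 0)) n + val (.fBox (.var 0)) n - 1 = val (.var 0) n := by
    rw [val_box_var]
    simp only [val, pow_succ]
    field_simp
    ring
  change _ = max 0 (val (.fBox (.var 0)) n + val (.fBox (.var 0)) n - 1)
  rw [hsq, max_eq_right h0]

end LukCounter

/-- **Lemma.** Over transitive (safe) Łukasiewicz Kripke models, the premises `x ↔ (□x)²`,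
`□(x ↔ (□x)²)`, `¬◇□0` do not locally entail `¬x ∨ x`; in particular this is witnessed at
world `0` of the model with worlds `ℕ`, accessibility `<`, `e(0,x) = 0.1` and
`e(n+1,x) = (e(n,x)+1)/2`. -/
theorem luk_transitive_countermodel :
    ∃ (M : LukModel ℕ) (g : M.W ≃ ℕ), M.IsTrans ∧
      (∀ a b : M.W, M.R a b ↔ g a < g b) ∧
      M.e (g.symm 0) (.var 0) = 0.1 ∧
      (∀ n : ℕ, M.e (g.symm (n + 1)) (.var 0) = (M.e (g.symm n) (.var 0) + 1) / 2) ∧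
      M.e (g.symm 0) (MFormula.fIff (.var 0)
        (.fMul (.fBox (.var 0)) (.fBox (.var 0)))) = 1 ∧
      M.e (g.symm 0) (.fBox (MFormula.fIff (.var 0)
        (.fMul (.fBox (.var 0)) (.fBox (.var 0))))) = 1 ∧
      M.e (g.symm 0) (MFormula.fNeg (.fDia (.fBox .fZero))) = 1 ∧
      M.e (g.symm 0) (.fOr (MFormula.fNeg (.var 0)) (.var 0)) < 1 := by
  refine ⟨LukCounter.model, Equiv.refl ℕ, fun a b c hab hbc => Nat.lt_trans hab hbc,
    fun a b => Iff.rfl, ?_, fun n => ?_, LukCounter.val_premise 0,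
    LukCounter.val_box_of_eq_one LukCounter.val_premise 0, ?_, ?_⟩
  · change (1 - 0.9 / 2 ^ 0 : ℝ) = 0.1
    norm_num
  · change (1 - 0.9 / 2 ^ (n + 1) : ℝ) = ((1 - 0.9 / 2 ^ n) + 1) / 2
    rw [pow_succ]
    field_simp
    ring
  · change min 1 (1 - LukCounter.val (.fDia (.fBox .fZero)) 0 + 0) = 1
    rw [LukCounter.val_dia_of_eq_zero LukCounter.val_box_zero]
    norm_num
  · change max (min 1 (1 - (1 - 0.9 / 2 ^ 0) + 0)) (1 - 0.9 / 2 ^ 0) < (1 : ℝ)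
    norm_num
end

section
/- The local consequence relation over all safe Kripke models valued in the finite MV chains {MV_n : n ∈ ℕ} coincides with the local consequence relation over all safe Kripke models valued in the standard MV algebra [0,1]_Ł; however, the local consequence relation over transitive models valued in {MV_n : n ∈ ℕ} is strictly stronger than the local consequence relation over transitive models valued in [0,1]_Ł. -/
/-- A Łukasiewicz Kripke model is valued in the finite MV chain `MV_n` when every formula
takes at every world a value of the form `k/n` with `0 ≤ k ≤ n`. -/
def LukModel.ValuedInMV {V : Type} (n : ℕ) (M : LukModel V) : Prop :=
  ∀ (v : M.W) (φ : MFormula V), ∃ k ≤ n, M.e v φ = (k : ℝ) / n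

/-- Local consequence over all safe models valued in the finite MV chains. -/
def ConsMVAll (Γ : List (MFormula ℕ)) (φ : MFormula ℕ) : Prop :=
  ∀ n : ℕ, 0 < n → ∀ M : LukModel ℕ, M.ValuedInMV n →
    ∀ v : M.W, (∀ γ ∈ Γ, M.e v γ = 1) → M.e v φ = 1

/-- Local consequence over all safe models valued in the standard MV algebra. -/
def ConsLukAll (Γ : List (MFormula ℕ)) (φ : MFormula ℕ) : Prop :=
  ∀ M : LukModel ℕ, ∀ v : M.W, (∀ γ ∈ Γ, M.e v γ = 1) → M.e v φ = 1

/-- Local consequence over transitive models valued in the finite MV chains. -/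
def ConsMVTrans (Γ : List (MFormula ℕ)) (φ : MFormula ℕ) : Prop :=
  ∀ n : ℕ, 0 < n → ∀ M : LukModel ℕ, M.IsTrans → M.ValuedInMV n →
    ∀ v : M.W, (∀ γ ∈ Γ, M.e v γ = 1) → M.e v φ = 1

/-- Local consequence over transitive models valued in the standard MV algebra. -/
def ConsLukTrans (Γ : List (MFormula ℕ)) (φ : MFormula ℕ) : Prop :=
  ∀ M : LukModel ℕ, M.IsTrans →
    ∀ v : M.W, (∀ γ ∈ Γ, M.e v γ = 1) → M.e v φ = 1

/-! ### Models generated by a valuation -/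

/-- The value of a formula on the frame `(W, R)` under the valuation `val`; the bounds `1` and `0`
are inserted so that the infimum and supremum are the intended ones at worlds without successors. -/
noncomputable def evalOn {V W : Type} (R : W → W → Prop) (val : W → V → ℝ) : MFormula V → W → ℝ
  | .var p => fun w => val w p
  | .fZero => fun _ => 0
  | .fOne => fun _ => 1
  | .fAnd φ ψ => fun w => min (evalOn R val φ w) (evalOn R val ψ w)
  | .fOr φ ψ => fun w => max (evalOn R val φ w) (evalOn R val ψ w)
  | .fMul φ ψ => fun w => max 0 (evalOn R val φ w + evalOn R val ψ w - 1)
  | .fImp φ ψ => fun w => min 1 (1 - evalOn R val φ w + evalOn R val ψ w)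
  | .fBox φ => fun w => sInf (insert (1 : ℝ) {a | ∃ u, R w u ∧ evalOn R val φ u = a})
  | .fDia φ => fun w => sSup (insert (0 : ℝ) {a | ∃ u, R w u ∧ evalOn R val φ u = a})

section
variable {V W : Type} (R : W → W → Prop) (val : W → V → ℝ)

lemma insert_subset_Icc {f : W → ℝ} (hf : ∀ w, f w ∈ Set.Icc (0 : ℝ) 1) {c : ℝ}
    (hc : c ∈ Set.Icc (0 : ℝ) 1) (w : W) :
    insert c {a | ∃ u, R w u ∧ f u = a} ⊆ Set.Icc (0 : ℝ) 1 := by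
  rintro a (rfl | ⟨u, _, rfl⟩)
  exacts [hc, hf u]

lemma isGLB_insert {f : W → ℝ} (hf : ∀ w, f w ∈ Set.Icc (0 : ℝ) 1) (w : W) :
    IsGLB (insert (1 : ℝ) {a | ∃ u, R w u ∧ f u = a})
      (sInf (insert (1 : ℝ) {a | ∃ u, R w u ∧ f u = a})) :=
  isGLB_csInf ⟨1, Set.mem_insert _ _⟩
    (bddBelow_Icc.mono (insert_subset_Icc R hf (by simp) w))

lemma isLUB_insert {f : W → ℝ} (hf : ∀ w, f w ∈ Set.Icc (0 : ℝ) 1) (w : W) :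
    IsLUB (insert (0 : ℝ) {a | ∃ u, R w u ∧ f u = a})
      (sSup (insert (0 : ℝ) {a | ∃ u, R w u ∧ f u = a})) :=
  isLUB_csSup ⟨0, Set.mem_insert _ _⟩
    (bddAbove_Icc.mono (insert_subset_Icc R hf (by simp) w))

lemma evalOn_mem (hval : ∀ w p, val w p ∈ Set.Icc (0 : ℝ) 1) (φ : MFormula V) :
    ∀ w, evalOn R val φ w ∈ Set.Icc (0 : ℝ) 1 := by
  induction φ with
  | var p => exact fun w => hval w p
  | fZero => intro w; simp [evalOn]
  | fOne => intro w; simp [evalOn]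
  | fAnd φ ψ h1 h2 =>
    intro w
    exact ⟨le_min (h1 w).1 (h2 w).1, (min_le_left _ _).trans (h1 w).2⟩
  | fOr φ ψ h1 h2 =>
    intro w
    exact ⟨(h1 w).1.trans (le_max_left _ _), max_le (h1 w).2 (h2 w).2⟩
  | fMul φ ψ h1 h2 =>
    intro w
    have a := (h1 w).2
    have b := (h2 w).2
    exact ⟨le_max_left _ _, max_le zero_le_one (by linarith)⟩
  | fImp φ ψ h1 h2 =>
    intro w
    have a := (h1 w).2
    have b := (h2 w).1
    exact ⟨le_min zero_le_one (by linarith), min_le_left _ _⟩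
  | fBox φ h =>
    intro w
    have H := isGLB_insert R h w
    exact ⟨H.2 fun a ha => (insert_subset_Icc R h (by simp) w ha).1, H.1 (Set.mem_insert _ _)⟩
  | fDia φ h =>
    intro w
    have H := isLUB_insert R h w
    exact ⟨H.1 (Set.mem_insert _ _), H.2 fun a ha => (insert_subset_Icc R h (by simp) w ha).2⟩

/-- The Kripke model over `[0,1]_Ł` on the frame `(W, R)` generated by the valuation `val`. -/
noncomputable def mkModel [hne : Nonempty W] (hval : ∀ w p, val w p ∈ Set.Icc (0 : ℝ) 1) :
    LukModel V where
  W := W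
  nonempty := hne
  R := R
  e w φ := evalOn R val φ w
  mem01 w φ := evalOn_mem R val hval φ w
  e_zero _ := rfl
  e_one _ := rfl
  e_and _ _ _ := rfl
  e_or _ _ _ := rfl
  e_mul _ _ _ := rfl
  e_imp _ _ _ := rfl
  e_box w φ := isGLB_insert R (evalOn_mem R val hval φ) w
  e_dia w φ := isLUB_insert R (evalOn_mem R val hval φ) w

end

/-- The universe of `MV_n`, as a set of reals. -/
def mvChain (n : ℕ) : Set ℝ := {a | ∃ k ≤ n, a = (k : ℝ) / n}

lemma mvChain_finite (n : ℕ) : (mvChain n).Finite := by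
  refine ((Set.finite_Iic n).image fun k : ℕ => (k : ℝ) / n).subset ?_
  rintro a ⟨k, hk, rfl⟩
  exact ⟨k, hk, rfl⟩

lemma zero_mem_mvChain (n : ℕ) : (0 : ℝ) ∈ mvChain n := ⟨0, by simp, by simp⟩

lemma one_mem_mvChain {n : ℕ} (hn : 0 < n) : (1 : ℝ) ∈ mvChain n :=
  ⟨n, le_rfl, by rw [div_self]; positivity⟩

lemma mul_mem_mvChain {n : ℕ} (hn : 0 < n) {a b : ℝ} (ha : a ∈ mvChain n) (hb : b ∈ mvChain n) :
    max 0 (a + b - 1) ∈ mvChain n := by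
  obtain ⟨k, hk, rfl⟩ := ha
  obtain ⟨l, hl, rfl⟩ := hb
  have hn' : (0 : ℝ) < n := by positivity
  have e : (k : ℝ) / n + l / n - 1 = (k + l - n) / n := by field_simp
  rw [e]
  rcases le_total (k + l) n with h | h
  · rw [max_eq_left]
    · exact zero_mem_mvChain n
    · have : (k + l : ℝ) ≤ n := by exact_mod_cast h
      exact div_nonpos_of_nonpos_of_nonneg (by linarith) hn'.le
  · rw [max_eq_right]
    · exact ⟨k + l - n, by omega, by push_cast [Nat.cast_sub h]; rfl⟩
    · have : (n : ℝ) ≤ k + l := by exact_mod_cast h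
      exact div_nonneg (by linarith) hn'.le

lemma imp_mem_mvChain {n : ℕ} (hn : 0 < n) {a b : ℝ} (ha : a ∈ mvChain n) (hb : b ∈ mvChain n) :
    min 1 (1 - a + b) ∈ mvChain n := by
  obtain ⟨k, hk, rfl⟩ := ha
  obtain ⟨l, hl, rfl⟩ := hb
  have hn' : (0 : ℝ) < n := by positivity
  rcases le_total k l with h | h
  · rw [min_eq_left]
    · exact one_mem_mvChain hn
    · have : (k : ℝ) / n ≤ l / n := by gcongr
      linarith
  · rw [min_eq_right]
    · refine ⟨n - k + l, by omega, ?_⟩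
      push_cast [Nat.cast_sub hk]
      field_simp
    · have : (l : ℝ) / n ≤ k / n := by gcongr
      linarith

/-- A valuation into `MV_n` generates an `MV_n`-valued model, since infima and suprema of nonempty
subsets of a finite chain are attained. -/
lemma valuedInMV_mkModel {V W : Type} [Nonempty W] (R : W → W → Prop) (val : W → V → ℝ)
    (hval : ∀ w p, val w p ∈ Set.Icc (0 : ℝ) 1) {n : ℕ} (hn : 0 < n)
    (hv : ∀ w p, val w p ∈ mvChain n) : (mkModel R val hval).ValuedInMV n := by
  intro w φ
  change evalOn R val φ w ∈ mvChain n
  have hsub : ∀ (φ : MFormula V) (c : ℝ), c ∈ mvChain n → (∀ w, evalOn R val φ w ∈ mvChain n) →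
      ∀ w, insert c {a | ∃ u, R w u ∧ evalOn R val φ u = a} ⊆ mvChain n := by
    rintro φ c hc h w a (rfl | ⟨u, _, rfl⟩)
    exacts [hc, h u]
  induction φ generalizing w with
  | var p => exact hv w p
  | fZero => exact zero_mem_mvChain n
  | fOne => exact one_mem_mvChain hn
  | fAnd φ ψ h1 h2 =>
    change min _ _ ∈ _
    rcases min_choice (evalOn R val φ w) (evalOn R val ψ w) with h | h <;> rw [h]
    exacts [h1 w, h2 w]
  | fOr φ ψ h1 h2 =>
    change max _ _ ∈ _
    rcases max_choice (evalOn R val φ w) (evalOn R val ψ w) with h | h <;> rw [h]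
    exacts [h1 w, h2 w]
  | fMul φ ψ h1 h2 => exact mul_mem_mvChain hn (h1 w) (h2 w)
  | fImp φ ψ h1 h2 => exact imp_mem_mvChain hn (h1 w) (h2 w)
  | fBox φ h =>
    have hs := hsub φ 1 (one_mem_mvChain hn) h w
    exact hs ((isGLB_insert R (evalOn_mem R val hval φ) w).mem_of_isClosed
      ⟨1, Set.mem_insert _ _⟩ ((mvChain_finite n).subset hs).isClosed)
  | fDia φ h =>
    have hs := hsub φ 0 (zero_mem_mvChain n) h w
    exact hs ((isLUB_insert R (evalOn_mem R val hval φ) w).mem_of_isClosed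
      ⟨0, Set.mem_insert _ _⟩ ((mvChain_finite n).subset hs).isClosed)

/-! ### Witnessed models by compactness -/

/-- The value of each `□φ` (`◇φ`) is attained at a successor unless it is the trivial bound `1`
(`0`).  Unlike `LukModel.Witnessed`, this does not force every world to have a successor. -/
def LukModel.WeaklyWitnessed {V : Type} (M : LukModel V) : Prop :=
  ∀ (v : M.W) (φ : MFormula V),
    (M.e v (.fBox φ) = 1 ∨ ∃ w, M.R v w ∧ M.e w φ = M.e v (.fBox φ)) ∧
    (M.e v (.fDia φ) = 0 ∨ ∃ w, M.R v w ∧ M.e w φ = M.e v (.fDia φ))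

/-- If `f` comes arbitrarily close to the positive bound `b x` on the `A`-successors of each
`x ∈ W`, with `A` compact, then at limits `x` of `W` the bound is reached exactly. -/
lemma exists_limit_witness {X : Type} [TopologicalSpace X] [T2Space X] {W : Set X}
    {A : Set (X × X)} (hA : IsCompact A) {b f : X → ℝ} (hb : Continuous b) (hf : Continuous f)
    (h : ∀ x ∈ W, b x ≤ 0 ∨ ∀ ε > 0, ∃ y, (x, y) ∈ A ∧ b x ≤ f y + ε) {x : X}
    (hx : x ∈ closure W) : b x ≤ 0 ∨ ∃ y, (x, y) ∈ A ∧ b x ≤ f y := by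
  by_cases hbx : b x ≤ 0
  · exact Or.inl hbx
  right
  have key : ∀ ε > 0, ∃ y, (x, y) ∈ A ∧ b x ≤ f y + ε := by
    intro ε hε
    have hc : IsClosed ({x | b x ≤ 0} ∪
        Prod.fst '' (A ∩ {p : X × X | b p.1 ≤ f p.2 + ε})) := by
      refine (isClosed_le hb continuous_const).union
        (((hA.inter_right ?_).image continuous_fst).isClosed)
      exact isClosed_le (by fun_prop) (by fun_prop)
    have hsub : W ⊆ {x | b x ≤ 0} ∪
        Prod.fst '' (A ∩ {p : X × X | b p.1 ≤ f p.2 + ε}) := by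
      intro z hz
      rcases h z hz with h0 | h1
      · exact Or.inl h0
      · obtain ⟨y, hy, hle⟩ := h1 ε hε
        exact Or.inr ⟨(z, y), ⟨hy, hle⟩, rfl⟩
    rcases closure_minimal hsub hc hx with h0 | ⟨⟨z, y⟩, ⟨hy, hle⟩, rfl⟩
    · exact absurd h0 hbx
    · exact ⟨y, hy, hle⟩
  have hcomp : IsCompact (A ∩ {p : X × X | p.1 = x}) :=
    hA.inter_right (isClosed_eq continuous_fst continuous_const)
  obtain ⟨y₁, hy₁, -⟩ := key 1 one_pos
  obtain ⟨⟨z, y⟩, ⟨hy, hz⟩, hmax⟩ := hcomp.exists_isMaxOn ⟨(x, y₁), hy₁, rfl⟩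
    (hf.comp continuous_snd).continuousOn
  obtain rfl : z = x := hz
  refine ⟨y, hy, le_of_forall_pos_le_add fun ε hε => ?_⟩
  obtain ⟨y', hy', hle⟩ := key ε hε
  have : f y' ≤ f y := hmax (show (z, y') ∈ _ from ⟨hy', rfl⟩)
  linarith

namespace LukModel

variable {V : Type} (M : LukModel V)

/-- Closure of the set of value vectors of the worlds of `M`. -/
def clW : Set (MFormula V → ℝ) := closure (Set.range M.e)

/-- Closure of the accessibility relation of `M`, transported to value vectors. -/
def clR : Set ((MFormula V → ℝ) × (MFormula V → ℝ)) :=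
  closure {p | ∃ v w, M.R v w ∧ p = (M.e v, M.e w)}

/-- A closed property of value vectors passes from the worlds of `M` to `M.clW`. -/
lemma clW_induction {P : (MFormula V → ℝ) → Prop} (hP : IsClosed {x | P x})
    (h : ∀ v, P (M.e v)) {x : MFormula V → ℝ} (hx : x ∈ M.clW) : P x :=
  closure_minimal (Set.range_subset_iff.2 h) hP hx

lemma clR_induction {P : (MFormula V → ℝ) × (MFormula V → ℝ) → Prop} (hP : IsClosed {x | P x})
    (h : ∀ v w, M.R v w → P (M.e v, M.e w)) {p : (MFormula V → ℝ) × (MFormula V → ℝ)}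
    (hp : p ∈ M.clR) : P p := by
  refine closure_minimal ?_ hP hp
  rintro _ ⟨v, w, hvw, rfl⟩
  exact h v w hvw

lemma clR_snd_mem {p : (MFormula V → ℝ) × (MFormula V → ℝ)} (hp : p ∈ M.clR) : p.2 ∈ M.clW :=
  M.clR_induction (P := fun p => p.2 ∈ M.clW) (isClosed_closure.preimage continuous_snd)
    (fun _ w _ => subset_closure ⟨w, rfl⟩) hp

lemma clW_mem01 {x : MFormula V → ℝ} (hx : x ∈ M.clW) (φ : MFormula V) :
    x φ ∈ Set.Icc (0 : ℝ) 1 :=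
  M.clW_induction (P := fun x => x φ ∈ Set.Icc (0 : ℝ) 1)
    (isClosed_Icc.preimage (continuous_apply φ)) (fun v => M.mem01 v φ) hx

lemma isCompact_clR : IsCompact M.clR := by
  let K : Set (MFormula V → ℝ) := Set.univ.pi fun _ => Set.Icc (0 : ℝ) 1
  have hI : IsCompact K :=
    isCompact_univ_pi fun _ => isCompact_Icc
  refine (hI.prod hI).of_isClosed_subset isClosed_closure fun p hp => ?_
  refine M.clR_induction (P := fun p => p ∈ K ×ˢ K) (hI.prod hI).isClosed (fun v w _ => ?_) hp
  exact ⟨fun φ _ => M.mem01 v φ, fun φ _ => M.mem01 w φ⟩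

lemma clR_box_le {x y : MFormula V → ℝ} (h : (x, y) ∈ M.clR) (φ : MFormula V) :
    x (.fBox φ) ≤ y φ := by
  refine M.clR_induction (P := fun p => p.1 (.fBox φ) ≤ p.2 φ)
    (isClosed_le (by fun_prop) (by fun_prop)) (fun v w hvw => ?_) h
  exact (M.e_box v φ).1 (Or.inr ⟨w, hvw, rfl⟩)

lemma clR_le_dia {x y : MFormula V → ℝ} (h : (x, y) ∈ M.clR) (φ : MFormula V) :
    y φ ≤ x (.fDia φ) := by
  refine M.clR_induction (P := fun p => p.2 φ ≤ p.1 (.fDia φ))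
    (isClosed_le (by fun_prop) (by fun_prop)) (fun v w hvw => ?_) h
  exact (M.e_dia v φ).1 (Or.inr ⟨w, hvw, rfl⟩)

lemma clW_box_witness {x : MFormula V → ℝ} (hx : x ∈ M.clW) (φ : MFormula V) :
    x (.fBox φ) = 1 ∨ ∃ y, (x, y) ∈ M.clR ∧ y φ = x (.fBox φ) := by
  have H := exists_limit_witness M.isCompact_clR (b := fun x => 1 - x (.fBox φ))
    (f := fun y => 1 - y φ) (W := Set.range M.e) (by fun_prop) (by fun_prop) ?_ hx
  · rcases H with h | ⟨y, hy, hle⟩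
    · exact Or.inl (le_antisymm (M.clW_mem01 hx _).2 (by linarith))
    · exact Or.inr ⟨y, hy, le_antisymm (by linarith) (M.clR_box_le hy φ)⟩
  · rintro _ ⟨v, rfl⟩
    rcases (M.mem01 v (.fBox φ)).2.eq_or_lt with h | h
    · exact Or.inl (by simp [h])
    · refine Or.inr fun ε hε => ?_
      -- Staying below `1` as well excludes the inserted bound, so the value is a successor's.
      have hlt : M.e v (.fBox φ) < min 1 (M.e v (.fBox φ) + ε) := lt_min h (by linarith)
      obtain ⟨c, hc, -, hc'⟩ := (M.e_box v φ).exists_between hlt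
      obtain ⟨h1, h2⟩ := lt_min_iff.1 hc'
      rcases hc with rfl | ⟨w, hw, rfl⟩
      · exact absurd h1 (lt_irrefl _)
      · exact ⟨M.e w, subset_closure ⟨v, w, hw, rfl⟩, by linarith⟩

lemma clW_dia_witness {x : MFormula V → ℝ} (hx : x ∈ M.clW) (φ : MFormula V) :
    x (.fDia φ) = 0 ∨ ∃ y, (x, y) ∈ M.clR ∧ y φ = x (.fDia φ) := by
  have H := exists_limit_witness M.isCompact_clR (b := fun x => x (.fDia φ))
    (f := fun y => y φ) (W := Set.range M.e) (by fun_prop) (by fun_prop) ?_ hx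
  · rcases H with h | ⟨y, hy, hle⟩
    · exact Or.inl (le_antisymm h (M.clW_mem01 hx _).1)
    · exact Or.inr ⟨y, hy, le_antisymm (M.clR_le_dia hy φ) hle⟩
  · rintro _ ⟨v, rfl⟩
    rcases (M.mem01 v (.fDia φ)).1.eq_or_lt with h | h
    · exact Or.inl (by simp [← h])
    · refine Or.inr fun ε hε => ?_
      have hlt : max 0 (M.e v (.fDia φ) - ε) < M.e v (.fDia φ) := max_lt h (by linarith)
      obtain ⟨c, hc, hc', -⟩ := (M.e_dia v φ).exists_between hlt
      obtain ⟨h1, h2⟩ := max_lt_iff.1 hc'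
      rcases hc with rfl | ⟨w, hw, rfl⟩
      · exact absurd h1 (lt_irrefl _)
      · exact ⟨M.e w, subset_closure ⟨v, w, hw, rfl⟩, by linarith⟩

/-- The model on the closure of the value vectors of `M`, in which a world is its own vector of
formula values. -/
def closureModel : LukModel V where
  W := M.clW
  nonempty := let ⟨v⟩ := M.nonempty; ⟨⟨M.e v, subset_closure ⟨v, rfl⟩⟩⟩
  R x y := (x.1, y.1) ∈ M.clR
  e x φ := x.1 φ
  mem01 x φ := M.clW_mem01 x.2 φ
  e_zero x := M.clW_induction (P := fun x => x .fZero = 0)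
    (isClosed_eq (by fun_prop) (by fun_prop)) M.e_zero x.2
  e_one x := M.clW_induction (P := fun x => x .fOne = 1)
    (isClosed_eq (by fun_prop) (by fun_prop)) M.e_one x.2
  e_and x φ ψ := M.clW_induction (P := fun x => x (.fAnd φ ψ) = min (x φ) (x ψ))
    (isClosed_eq (by fun_prop) (by fun_prop)) (fun v => M.e_and v φ ψ) x.2
  e_or x φ ψ := M.clW_induction (P := fun x => x (.fOr φ ψ) = max (x φ) (x ψ))
    (isClosed_eq (by fun_prop) (by fun_prop)) (fun v => M.e_or v φ ψ) x.2
  e_mul x φ ψ := M.clW_induction (P := fun x => x (.fMul φ ψ) = max 0 (x φ + x ψ - 1))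
    (isClosed_eq (by fun_prop) (by fun_prop)) (fun v => M.e_mul v φ ψ) x.2
  e_imp x φ ψ := M.clW_induction (P := fun x => x (.fImp φ ψ) = min 1 (1 - x φ + x ψ))
    (isClosed_eq (by fun_prop) (by fun_prop)) (fun v => M.e_imp v φ ψ) x.2
  e_box x φ := by
    constructor
    · rintro a (rfl | ⟨y, hy, rfl⟩)
      exacts [(M.clW_mem01 x.2 _).2, M.clR_box_le hy φ]
    · intro c hc
      rcases M.clW_box_witness x.2 φ with h | ⟨y, hy, h⟩
      · exact h ▸ hc (Or.inl rfl)
      · exact h ▸ hc (Or.inr ⟨⟨y, M.clR_snd_mem hy⟩, hy, rfl⟩)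
  e_dia x φ := by
    constructor
    · rintro a (rfl | ⟨y, hy, rfl⟩)
      exacts [(M.clW_mem01 x.2 _).1, M.clR_le_dia hy φ]
    · intro c hc
      rcases M.clW_dia_witness x.2 φ with h | ⟨y, hy, h⟩
      · exact h ▸ hc (Or.inl rfl)
      · exact h ▸ hc (Or.inr ⟨⟨y, M.clR_snd_mem hy⟩, hy, rfl⟩)

lemma closureModel_weaklyWitnessed : M.closureModel.WeaklyWitnessed := by
  intro x φ
  refine ⟨(M.clW_box_witness x.2 φ).imp_right ?_, (M.clW_dia_witness x.2 φ).imp_right ?_⟩ <;>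
  · rintro ⟨y, hy, h⟩
    exact ⟨⟨y, M.clR_snd_mem hy⟩, hy, h⟩

end LukModel

/-! ### Rational approximation -/

/-- A finite set of positive reals stays positive under some `ℚ`-linear map `ℝ → ℚ` fixing `1`. -/
lemma exists_linear_pos (T : Finset ℝ) :
    ∃ h : ℝ →ₗ[ℚ] ℚ, h 1 = 1 ∧ ∀ t ∈ T, 0 < t → 0 < h t := by
  classical
  let B := Module.Basis.ofVectorSpace ℚ ℝ
  let g : ℝ → (Module.Basis.ofVectorSpaceIndex ℚ ℝ → ℝ) → ℝ :=
    fun t r => ∑ i ∈ (B.repr t).support, (B.repr t i : ℝ) * r i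
  have hg : ∀ t, Continuous (g t) := fun t => by fun_prop
  have hgB : ∀ t, g t (fun i => B i) = t := fun t => by
    conv_rhs => rw [← B.linearCombination_repr t, Finsupp.linearCombination_apply, Finsupp.sum]
    exact Finset.sum_congr rfl fun i _ => by rw [Rat.smul_def]
  let T' := (insert 1 T).filter (0 < ·)
  have hopen : IsOpen (⋂ t ∈ T', {r | 0 < g t r}) :=
    isOpen_biInter_finset fun t _ => isOpen_lt continuous_const (hg t)
  have hne : (⋂ t ∈ T', {r | 0 < g t r}).Nonempty := by
    refine ⟨fun i => B i, Set.mem_iInter₂.2 fun t ht => ?_⟩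
    rw [Set.mem_ofPred_eq, hgB]
    exact (Finset.mem_filter.1 ht).2
  have hd : DenseRange (Pi.map (fun (_ : Module.Basis.ofVectorSpaceIndex ℚ ℝ) (q : ℚ) => (q : ℝ))) :=
    DenseRange.piMap fun _ => Rat.denseRange_cast
  obtain ⟨q, hq⟩ := hd.exists_mem_open hopen hne
  let h := B.constr ℚ q
  have hh : ∀ t, ((h t : ℚ) : ℝ) = g t (fun i => (q i : ℝ)) := fun t => by
    simp [h, g, Module.Basis.constr_apply, Finsupp.sum]
  have hpos : ∀ t ∈ T', 0 < h t := fun t ht => by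
    have := Set.mem_iInter₂.1 hq t ht
    rw [Set.mem_ofPred_eq] at this
    have h2 : (0 : ℝ) < (h t : ℚ) := by rw [hh]; exact this
    exact_mod_cast h2
  have h1 : 0 < h 1 := hpos 1 (by simp [T'])
  refine ⟨(h 1)⁻¹ • h, by simp [h1.ne'], fun t ht h0 => ?_⟩
  have := hpos t (by simp [T', ht, h0])
  simp only [LinearMap.smul_apply, smul_eq_mul]
  positivity

/-- On a finite set of values, `[0,1]_Ł` can be replaced by a finite MV chain: `g` respects the
order, the order of `a + b` relative to `1`, and the affine parts of the operations. -/
lemma exists_rational_copy (S : Finset ℝ) :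
    ∃ (n : ℕ) (g : ℝ → ℝ), 0 < n ∧ g 0 = 0 ∧ g 1 = 1 ∧
      (∀ a b, g (a + b - 1) = g a + g b - 1) ∧ (∀ a b, g (1 - a + b) = 1 - g a + g b) ∧
      (∀ a ∈ S, ∀ b ∈ S, a ≤ b → g a ≤ g b) ∧ (∀ a ∈ S, a < 1 → g a < 1) ∧
      (∀ a ∈ S, ∀ b ∈ S, a + b ≤ 1 → g a + g b ≤ 1) ∧
      (∀ a ∈ S, ∀ b ∈ S, 1 ≤ a + b → 1 ≤ g a + g b) ∧
      (∀ a ∈ S, 0 ≤ a → a ≤ 1 → g a ∈ mvChain n) := by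
  classical
  let S' := insert 0 (insert 1 S)
  obtain ⟨h, h1, hpos⟩ := exists_linear_pos
    ((S' ×ˢ S').image (fun p => p.2 - p.1) ∪ (S' ×ˢ S').image (fun p => 1 - (p.1 + p.2)) ∪
      (S' ×ˢ S').image (fun p => p.1 + p.2 - 1))
  have hS : ∀ a ∈ S, a ∈ S' := fun a ha => by simp [S', ha]
  have h0S : (0 : ℝ) ∈ S' := by simp [S']
  have h1S : (1 : ℝ) ∈ S' := by simp [S']
  have p1 : ∀ a ∈ S', ∀ b ∈ S', a < b → h a < h b := fun a ha b hb hab => by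
    have := hpos (b - a) (Finset.mem_union_left _ (Finset.mem_union_left _
      (Finset.mem_image.2 ⟨(a, b), Finset.mem_product.2 ⟨ha, hb⟩, rfl⟩))) (by linarith)
    rw [map_sub] at this
    linarith
  have p1' : ∀ a ∈ S', ∀ b ∈ S', a ≤ b → h a ≤ h b := fun a ha b hb hab => by
    rcases hab.eq_or_lt with rfl | hlt
    exacts [le_rfl, (p1 a ha b hb hlt).le]
  have p2 : ∀ a ∈ S', ∀ b ∈ S', a + b ≤ 1 → h a + h b ≤ 1 := fun a ha b hb hab => by
    rcases hab.eq_or_lt with he | hlt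
    · rw [← map_add, he, h1]
    · have := hpos (1 - (a + b)) (Finset.mem_union_left _ (Finset.mem_union_right _
        (Finset.mem_image.2 ⟨(a, b), Finset.mem_product.2 ⟨ha, hb⟩, rfl⟩))) (by linarith)
      rw [map_sub, map_add, h1] at this
      linarith
  have p3 : ∀ a ∈ S', ∀ b ∈ S', 1 ≤ a + b → 1 ≤ h a + h b := fun a ha b hb hab => by
    rcases hab.eq_or_lt with he | hlt
    · rw [← map_add, ← he, h1]
    · have := hpos (a + b - 1) (Finset.mem_union_right _
        (Finset.mem_image.2 ⟨(a, b), Finset.mem_product.2 ⟨ha, hb⟩, rfl⟩)) (by linarith)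
      rw [map_sub, map_add, h1] at this
      linarith
  have hn : 0 < ∏ a ∈ S, (h a).den := Finset.prod_pos fun a _ => (h a).den_pos
  refine ⟨∏ a ∈ S, (h a).den, fun a => (h a : ℝ), hn, by simp, by simp [h1],
    fun a b => by simp [h1], fun a b => by simp [h1], ?_, ?_, ?_, ?_, ?_⟩
  · exact fun a ha b hb hab => by
      have := p1' a (hS a ha) b (hS b hb) hab
      dsimp only
      exact_mod_cast this
  · exact fun a ha hlt => by
      have := p1 a (hS a ha) 1 h1S hlt
      rw [h1] at this
      dsimp only
      exact_mod_cast this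
  · exact fun a ha b hb hab => by
      have := p2 a (hS a ha) b (hS b hb) hab
      dsimp only
      exact_mod_cast this
  · exact fun a ha b hb hab => by
      have := p3 a (hS a ha) b (hS b hb) hab
      dsimp only
      exact_mod_cast this
  · intro a ha h0 hle
    have q0 : 0 ≤ h a := by simpa using p1' 0 h0S a (hS a ha) h0
    have q1 : h a ≤ 1 := by simpa [h1] using p1' a (hS a ha) 1 h1S hle
    obtain ⟨m, hm⟩ := Finset.dvd_prod_of_mem (fun a => (h a).den) ha
    have hnum : (((h a).num.toNat : ℕ) : ℚ) = (h a).num := by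
      exact_mod_cast Int.toNat_of_nonneg (Rat.num_nonneg.2 q0)
    have hd0 : ((h a).den : ℚ) ≠ 0 := by exact_mod_cast (h a).den_ne_zero
    have hm0 : (m : ℚ) ≠ 0 := by
      rintro hm0
      have : m = 0 := by exact_mod_cast hm0
      simp [this] at hm
      omega
    have heq : h a = (((h a).num.toNat * m : ℕ) : ℚ) / ((∏ a ∈ S, (h a).den : ℕ) : ℚ) := by
      rw [hm]
      push_cast
      rw [hnum, mul_div_mul_right _ _ hm0, Rat.num_div_den]
    refine ⟨(h a).num.toNat * m, ?_, ?_⟩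
    · rw [heq, div_le_one (by exact_mod_cast hn)] at q1
      exact_mod_cast q1
    · have := congrArg (fun q : ℚ => (q : ℝ)) heq
      push_cast at this ⊢
      exact this

/-! ### Finite chains suffice for arbitrary models -/

namespace MFormula

variable {V : Type}

/-- Subformulas, the formula itself included. -/
def sub [DecidableEq V] : MFormula V → Finset (MFormula V)
  | .var p => {.var p}
  | .fZero => {.fZero}
  | .fOne => {.fOne}
  | .fAnd φ ψ => insert (.fAnd φ ψ) (sub φ ∪ sub ψ)
  | .fOr φ ψ => insert (.fOr φ ψ) (sub φ ∪ sub ψ)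
  | .fMul φ ψ => insert (.fMul φ ψ) (sub φ ∪ sub ψ)
  | .fImp φ ψ => insert (.fImp φ ψ) (sub φ ∪ sub ψ)
  | .fBox φ => insert (.fBox φ) (sub φ)
  | .fDia φ => insert (.fDia φ) (sub φ)

lemma self_mem_sub [DecidableEq V] (φ : MFormula V) : φ ∈ φ.sub := by
  cases φ <;> simp [sub]

/-- Modal depth. -/
def depth : MFormula V → ℕ
  | .var _ => 0
  | .fZero => 0
  | .fOne => 0
  | .fAnd φ ψ => max (depth φ) (depth ψ)
  | .fOr φ ψ => max (depth φ) (depth ψ)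
  | .fMul φ ψ => max (depth φ) (depth ψ)
  | .fImp φ ψ => max (depth φ) (depth ψ)
  | .fBox φ => depth φ + 1
  | .fDia φ => depth φ + 1

end MFormula

open Classical in
/-- The worlds reached from `v` in exactly `k` steps, each going to one of the worlds
`wit w φ` with `φ ∈ F`. -/
noncomputable def levels {W V : Type} (wit : W → MFormula V → W)
    (F : Finset (MFormula V)) (v : W) : ℕ → Finset W
  | 0 => {v}
  | k + 1 => (levels wit F v k).biUnion fun w => F.image (wit w)

lemma wit_mem_levels {W V : Type} {wit : W → MFormula V → W} {F : Finset (MFormula V)} {v : W}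
    {k : ℕ} {w : W} (hw : w ∈ levels wit F v k) {φ : MFormula V} (hφ : φ ∈ F) :
    wit w φ ∈ levels wit F v (k + 1) := by
  classical
  exact Finset.mem_biUnion.2 ⟨w, hw, Finset.mem_image.2 ⟨φ, hφ, rfl⟩⟩

/-- A weakly witnessed model can be replaced, as far as the truth of finitely many formulas at one
world is concerned, by a model over a finite MV chain. -/
lemma exists_mv_model (M : LukModel ℕ) (hM : M.WeaklyWitnessed) (v : M.W)
    (Δ : Finset (MFormula ℕ)) :
    ∃ n : ℕ, 0 < n ∧ ∃ N : LukModel ℕ, N.ValuedInMV n ∧ ∃ v' : N.W,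
      ∀ φ ∈ Δ, N.e v' φ = 1 ↔ M.e v φ = 1 := by
  classical
  -- One witness function serves both modalities: it is indexed by the modal formula itself.
  have hwit : ∀ (w : M.W) (χ : MFormula ℕ), ∃ u : M.W,
      (∀ φ, χ = .fBox φ → M.e w χ = 1 ∨ (M.R w u ∧ M.e u φ = M.e w χ)) ∧
      (∀ φ, χ = .fDia φ → M.e w χ = 0 ∨ (M.R w u ∧ M.e u φ = M.e w χ)) := by
    intro w χ
    cases χ with
    | fBox φ =>
      rcases (hM w φ).1 with h | ⟨u, h⟩
      · exact ⟨w, by simp [h], by simp⟩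
      · exact ⟨u, by rintro _ ⟨⟩; exact Or.inr h, by simp⟩
    | fDia φ =>
      rcases (hM w φ).2 with h | ⟨u, h⟩
      · exact ⟨w, by simp, by simp [h]⟩
      · exact ⟨u, by simp, by rintro _ ⟨⟩; exact Or.inr h⟩
    | _ => exact ⟨w, by simp, by simp⟩
  choose wit hbox hdia using hwit
  let F := Δ.biUnion MFormula.sub
  let d := Δ.sup MFormula.depth
  let L := levels wit F v
  let S : Finset ℝ := insert 0 (insert 1
    ((Finset.range (d + 1)).biUnion fun k => (L k).biUnion fun w => F.image (M.e w)))
  have hS : ∀ {k w φ}, k ≤ d → w ∈ L k → φ ∈ F → M.e w φ ∈ S := by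
    intro k w φ hk hw hφ
    refine Finset.mem_insert_of_mem (Finset.mem_insert_of_mem ?_)
    exact Finset.mem_biUnion.2 ⟨k, Finset.mem_range.2 (by omega),
      Finset.mem_biUnion.2 ⟨w, hw, Finset.mem_image.2 ⟨φ, hφ, rfl⟩⟩⟩
  have h0S : (0 : ℝ) ∈ S := by simp [S]
  have h1S : (1 : ℝ) ∈ S := by simp [S]
  obtain ⟨n, g, hn, g0, g1, gmul, gimp, gmono, glt, gadd, gadd', gmv⟩ := exists_rational_copy S
  let val : ℕ × M.W → ℕ → ℝ := fun x p =>
    if x.1 ≤ d ∧ x.2 ∈ L x.1 ∧ .var p ∈ F then g (M.e x.2 (.var p)) else 0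
  let R : ℕ × M.W → ℕ × M.W → Prop := fun x y => y.1 = x.1 + 1 ∧ M.R x.2 y.2 ∧ y.2 ∈ L y.1
  have hvS : ∀ x p, val x p ∈ mvChain n := by
    intro x p
    simp only [val]
    split_ifs with h
    · exact gmv _ (hS h.1 h.2.1 h.2.2) (M.mem01 _ _).1 (M.mem01 _ _).2
    · exact zero_mem_mvChain n
  have hval : ∀ x p, val x p ∈ Set.Icc (0 : ℝ) 1 := by
    intro x p
    obtain ⟨k, hk, h⟩ := hvS x p
    rw [h]
    exact ⟨by positivity, div_le_one_of_le₀ (by exact_mod_cast hk) (by positivity)⟩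
  have : Nonempty (ℕ × M.W) := ⟨(0, v)⟩
  let N := mkModel R val hval
  let pt : ℕ → M.W → N.W := fun k w => (k, w)
  have truth : ∀ (φ : MFormula ℕ), φ.sub ⊆ F → ∀ k w, φ.depth + k ≤ d → w ∈ L k →
      N.e (pt k w) φ = g (M.e w φ) := by
    intro φ
    induction φ with
    | var p =>
      intro hF k w hk hw
      have hF' : MFormula.var p ∈ F := hF (MFormula.self_mem_sub _)
      have hk' : k ≤ d := by omega
      exact if_pos ⟨hk', hw, hF'⟩
    | fZero =>
      intro hF k w hk hw
      rw [M.e_zero, N.e_zero, g0]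
    | fOne =>
      intro hF k w hk hw
      rw [M.e_one, N.e_one, g1]
    | fAnd φ ψ ih1 ih2 =>
      intro hF k w hk hw
      simp only [MFormula.depth] at hk
      simp only [MFormula.sub, Finset.insert_subset_iff, Finset.union_subset_iff] at hF
      rw [N.e_and, M.e_and, ih1 hF.2.1 k w (by omega) hw, ih2 hF.2.2 k w (by omega) hw]
      have s1 := hS (by omega) hw (hF.2.1 φ.self_mem_sub)
      have s2 := hS (by omega) hw (hF.2.2 ψ.self_mem_sub)
      rcases le_total (M.e w φ) (M.e w ψ) with h | h
      · rw [min_eq_left h, min_eq_left (gmono _ s1 _ s2 h)]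
      · rw [min_eq_right h, min_eq_right (gmono _ s2 _ s1 h)]
    | fOr φ ψ ih1 ih2 =>
      intro hF k w hk hw
      simp only [MFormula.depth] at hk
      simp only [MFormula.sub, Finset.insert_subset_iff, Finset.union_subset_iff] at hF
      rw [N.e_or, M.e_or, ih1 hF.2.1 k w (by omega) hw, ih2 hF.2.2 k w (by omega) hw]
      have s1 := hS (by omega) hw (hF.2.1 φ.self_mem_sub)
      have s2 := hS (by omega) hw (hF.2.2 ψ.self_mem_sub)
      rcases le_total (M.e w φ) (M.e w ψ) with h | h
      · rw [max_eq_right h, max_eq_right (gmono _ s1 _ s2 h)]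
      · rw [max_eq_left h, max_eq_left (gmono _ s2 _ s1 h)]
    | fMul φ ψ ih1 ih2 =>
      intro hF k w hk hw
      simp only [MFormula.depth] at hk
      simp only [MFormula.sub, Finset.insert_subset_iff, Finset.union_subset_iff] at hF
      rw [N.e_mul, M.e_mul, ih1 hF.2.1 k w (by omega) hw, ih2 hF.2.2 k w (by omega) hw]
      have s1 := hS (by omega) hw (hF.2.1 φ.self_mem_sub)
      have s2 := hS (by omega) hw (hF.2.2 ψ.self_mem_sub)
      rcases le_total (M.e w φ + M.e w ψ) 1 with h | h
      · have := gadd _ s1 _ s2 h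
        rw [max_eq_left (by linarith), max_eq_left (by linarith), g0]
      · have := gadd' _ s1 _ s2 h
        rw [max_eq_right (by linarith), max_eq_right (by linarith), gmul]
    | fImp φ ψ ih1 ih2 =>
      intro hF k w hk hw
      simp only [MFormula.depth] at hk
      simp only [MFormula.sub, Finset.insert_subset_iff, Finset.union_subset_iff] at hF
      rw [N.e_imp, M.e_imp, ih1 hF.2.1 k w (by omega) hw, ih2 hF.2.2 k w (by omega) hw]
      have s1 := hS (by omega) hw (hF.2.1 φ.self_mem_sub)
      have s2 := hS (by omega) hw (hF.2.2 ψ.self_mem_sub)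
      rcases le_total (M.e w φ) (M.e w ψ) with h | h
      · have := gmono _ s1 _ s2 h
        rw [min_eq_left (by linarith), min_eq_left (by linarith), g1]
      · have := gmono _ s2 _ s1 h
        rw [min_eq_right (by linarith), min_eq_right (by linarith), gimp]
    | fBox φ ih =>
      intro hF k w hk hw
      simp only [MFormula.depth] at hk
      simp only [MFormula.sub, Finset.insert_subset_iff] at hF
      have s0 := hS (by omega) hw hF.1
      refine (N.e_box (pt k w) φ).unique ⟨?_, ?_⟩
      · rintro a (rfl | ⟨⟨k', u⟩, ⟨hk', hu, huL⟩, rfl⟩)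
        · exact g1 ▸ gmono _ s0 _ h1S (M.mem01 _ _).2
        · obtain rfl : k' = k + 1 := hk'
          change _ ≤ N.e (pt (k + 1) u) φ
          rw [ih hF.2 (k + 1) u (by omega) huL]
          exact gmono _ s0 _ (hS (by omega) huL (hF.2 φ.self_mem_sub))
            ((M.e_box w φ).1 (Or.inr ⟨u, hu, rfl⟩))
      · intro c hc
        rcases hbox w _ φ rfl with h | ⟨hR, h⟩
        · rw [h, g1]
          exact hc (Or.inl rfl)
        · have huL : wit w (.fBox φ) ∈ L (k + 1) := wit_mem_levels hw hF.1
          rw [← h, ← ih hF.2 (k + 1) _ (by omega) huL]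
          exact hc (Or.inr ⟨pt (k + 1) _, ⟨rfl, hR, huL⟩, rfl⟩)
    | fDia φ ih =>
      intro hF k w hk hw
      simp only [MFormula.depth] at hk
      simp only [MFormula.sub, Finset.insert_subset_iff] at hF
      have s0 := hS (by omega) hw hF.1
      refine (N.e_dia (pt k w) φ).unique ⟨?_, ?_⟩
      · rintro a (rfl | ⟨⟨k', u⟩, ⟨hk', hu, huL⟩, rfl⟩)
        · exact g0 ▸ gmono _ h0S _ s0 (M.mem01 _ _).1
        · obtain rfl : k' = k + 1 := hk'
          change N.e (pt (k + 1) u) φ ≤ _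
          rw [ih hF.2 (k + 1) u (by omega) huL]
          exact gmono _ (hS (by omega) huL (hF.2 φ.self_mem_sub)) _ s0
            ((M.e_dia w φ).1 (Or.inr ⟨u, hu, rfl⟩))
      · intro c hc
        rcases hdia w _ φ rfl with h | ⟨hR, h⟩
        · rw [h, g0]
          exact hc (Or.inl rfl)
        · have huL : wit w (.fDia φ) ∈ L (k + 1) := wit_mem_levels hw hF.1
          rw [← h, ← ih hF.2 (k + 1) _ (by omega) huL]
          exact hc (Or.inr ⟨pt (k + 1) _, ⟨rfl, hR, huL⟩, rfl⟩)
  refine ⟨n, hn, N, valuedInMV_mkModel R val hval hn hvS, pt 0 v, fun φ hφ => ?_⟩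
  have hsub : φ.sub ⊆ F := Finset.subset_biUnion_of_mem MFormula.sub hφ
  have hvL : v ∈ L 0 := Finset.mem_singleton_self v
  rw [truth φ hsub 0 v (Finset.le_sup (f := MFormula.depth) hφ) hvL]
  refine ⟨fun h => ?_, fun h => by rw [h, g1]⟩
  by_contra hne
  have := glt _ (hS (Nat.zero_le _) hvL (hsub φ.self_mem_sub))
    (lt_of_le_of_ne (M.mem01 _ _).2 hne)
  linarith

lemma consLukAll_of_consMVAll {Γ : List (MFormula ℕ)} {φ : MFormula ℕ} (h : ConsMVAll Γ φ) :
    ConsLukAll Γ φ := by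
  intro M v hΓ
  let v₁ : M.closureModel.W := ⟨M.e v, subset_closure ⟨v, rfl⟩⟩
  obtain ⟨n, hn, N, hN, v', hv'⟩ := exists_mv_model M.closureModel
    M.closureModel_weaklyWitnessed v₁ (insert φ Γ.toFinset)
  exact (hv' φ (by simp)).1 (h n hn N hN v' fun γ hγ => (hv' γ (by simp [hγ])).2 (hΓ γ hγ))

/-! ### Transitive models -/

lemma LukModel.e_iff_eq_one {V : Type} (M : LukModel V) (v : M.W) (φ ψ : MFormula V) :
    M.e v (.fIff φ ψ) = 1 ↔ M.e v φ = M.e v ψ := by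
  rw [MFormula.fIff, M.e_mul, M.e_imp, M.e_imp]
  constructor
  · intro h
    rcases min_cases 1 (1 - M.e v φ + M.e v ψ) with ⟨a, a'⟩ | ⟨a, a'⟩ <;>
    rcases min_cases 1 (1 - M.e v ψ + M.e v φ) with ⟨b, b'⟩ | ⟨b, b'⟩ <;>
    rw [a, b] at h <;>
    rcases max_cases 0 (1 : ℝ) with ⟨c, c'⟩ | ⟨c, c'⟩ <;>
    grind
  · intro h
    simp [h]

lemma LukModel.e_neg {V : Type} (M : LukModel V) (v : M.W) (φ : MFormula V) :
    M.e v (.fNeg φ) = 1 - M.e v φ := by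
  rw [MFormula.fNeg, M.e_imp, M.e_zero, add_zero]
  exact min_eq_right (by linarith [(M.mem01 v φ).1])

lemma LukModel.e_plus {V : Type} (M : LukModel V) (v : M.W) (φ ψ : MFormula V) :
    M.e v (.fImp (.fNeg φ) ψ) = min 1 (M.e v φ + M.e v ψ) := by
  rw [M.e_imp, M.e_neg]
  congr 1
  ring

lemma LukModel.e_box_eq_one {V : Type} (M : LukModel V) (v : M.W) (φ : MFormula V) :
    M.e v (.fBox φ) = 1 ↔ ∀ w, M.R v w → M.e w φ = 1 := by
  constructor
  · intro h w hw
    exact le_antisymm (M.mem01 _ _).2 (h ▸ (M.e_box v φ).1 (Or.inr ⟨w, hw, rfl⟩))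
  · intro h
    refine le_antisymm (M.mem01 _ _).2 ((M.e_box v φ).2 ?_)
    rintro a (rfl | ⟨w, hw, rfl⟩)
    exacts [le_rfl, (h w hw).ge]

/-- A positive value of `◇φ` is attained when the model is finitely valued. -/
lemma LukModel.exists_dia_witness {V : Type} {n : ℕ} (M : LukModel V) (hM : M.ValuedInMV n)
    (v : M.W) (φ : MFormula V) (h : 0 < M.e v (.fDia φ)) :
    ∃ w, M.R v w ∧ M.e w φ = M.e v (.fDia φ) := by
  have hsub : insert (0 : ℝ) {a | ∃ w, M.R v w ∧ M.e w φ = a} ⊆ mvChain n := by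
    rintro a (rfl | ⟨w, _, rfl⟩)
    exacts [zero_mem_mvChain n, hM w φ]
  rcases (M.e_dia v φ).mem_of_isClosed ⟨0, Set.mem_insert _ _⟩
    ((mvChain_finite n).subset hsub).isClosed with h0 | h1
  exacts [absurd h0 h.ne', h1]

/-- The formula `◇p`, for a fixed variable `p`. -/
def diaP : MFormula ℕ := .fDia (.var 0)

/-- The premises `□(p ↔ ◇p ⊕ ◇p)` and `◇p ↔ ¬◇p`, with `a ⊕ b` written as `¬a → b`. -/
def halvingPremises : List (MFormula ℕ) :=
  [.fBox (.fIff (.var 0) (.fImp (.fNeg diaP) diaP)), .fIff diaP (.fNeg diaP)]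

lemma halvingPremises_iff (M : LukModel ℕ) (v : M.W) :
    (∀ γ ∈ halvingPremises, M.e v γ = 1) ↔
      (∀ w, M.R v w → M.e w (.var 0) = min 1 (M.e w diaP + M.e w diaP)) ∧
        M.e v diaP = 1 / 2 := by
  simp only [halvingPremises, List.forall_mem_cons, M.e_box_eq_one, M.e_iff_eq_one, M.e_plus,
    M.e_neg]
  constructor
  · rintro ⟨h1, h2, -⟩
    exact ⟨h1, by linarith⟩
  · rintro ⟨h1, h2⟩
    exact ⟨h1, by linarith, by simp⟩

lemma consMVTrans_halving : ConsMVTrans halvingPremises .fZero := by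
  intro n hn M hT hM v hΓ
  obtain ⟨h1, h2⟩ := (halvingPremises_iff M v).1 hΓ
  exfalso
  have key : ∀ k : ℕ, ∃ w, M.R v w ∧ M.e w (.var 0) = (1 / 2) ^ (k + 1) := by
    intro k
    induction k with
    | zero =>
      obtain ⟨w, hw, he⟩ := M.exists_dia_witness hM v (.var 0) (by
        change 0 < M.e v diaP
        rw [h2]
        norm_num)
      exact ⟨w, hw, by rw [he]; simpa [diaP] using h2⟩
    | succ k ih =>
      obtain ⟨w, hw, he⟩ := ih
      have hlt : ((1 : ℝ) / 2) ^ (k + 1) < 1 := pow_lt_one₀ (by norm_num) (by norm_num) (by simp)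
      have hpos : (0 : ℝ) < (1 / 2) ^ (k + 1) := by positivity
      have h := h1 w hw
      rw [he] at h
      have hd : M.e w diaP = (1 / 2) ^ (k + 1 + 1) := by
        rw [pow_succ]
        rcases min_choice 1 (M.e w diaP + M.e w diaP) with hm | hm <;> rw [hm] at h <;> linarith
      obtain ⟨u, hu, hue⟩ := M.exists_dia_witness hM w (.var 0) (by
        change 0 < M.e w diaP
        rw [hd]
        positivity)
      exact ⟨u, hT _ _ _ hw hu, hue.trans hd⟩
  obtain ⟨w, -, hw⟩ := key n
  obtain ⟨j, -, hj⟩ := hM w (.var 0)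
  rw [hw] at hj
  have hn' : (0 : ℝ) < n := by positivity
  have hpow : (n : ℝ) < 2 ^ (n + 1) := by
    exact_mod_cast n.lt_two_pow_self.trans (Nat.pow_lt_pow_right (by norm_num) (by omega))
  have hj0 : 1 ≤ j := by
    rcases Nat.eq_zero_or_pos j with rfl | h
    · have : (0 : ℝ) < (1 / 2) ^ (n + 1) := by positivity
      rw [hj] at this
      simp at this
    · exact h
  have hj1 : (1 : ℝ) ≤ j := by exact_mod_cast hj0
  rw [one_div, inv_pow, eq_div_iff hn'.ne', inv_mul_eq_div] at hj
  have : (n : ℝ) / 2 ^ (n + 1) < 1 := by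
    rw [div_lt_one (by positivity)]
    exact hpow
  linarith

lemma not_consLukTrans_halving : ¬ ConsLukTrans halvingPremises .fZero := by
  intro h
  have hval : ∀ (i : ℕ) (_ : ℕ), ((1 : ℝ) / 2) ^ i ∈ Set.Icc (0 : ℝ) 1 := fun i _ =>
    ⟨by positivity, pow_le_one₀ (by norm_num) (by norm_num)⟩
  let M : LukModel ℕ := mkModel (fun i j : ℕ => i < j) (fun i _ => ((1 : ℝ) / 2) ^ i) hval
  have hd : ∀ i : ℕ, M.e i diaP = (1 / 2) ^ (i + 1) := by
    intro i
    refine (M.e_dia i (.var 0)).unique ⟨?_, fun c hc => ?_⟩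
    · rintro a (rfl | ⟨j, hj, rfl⟩)
      · positivity
      · exact pow_le_pow_of_le_one (by norm_num) (by norm_num) (show i + 1 ≤ j from hj)
    · exact hc (Or.inr ⟨(i + 1 : ℕ), Nat.lt_succ_self i, rfl⟩)
  have h01 := h M (fun a b c => Nat.lt_trans) (0 : ℕ) ((halvingPremises_iff M _).2 ⟨?_, ?_⟩)
  · exact zero_ne_one ((M.e_zero _).symm.trans h01)
  · intro (i : ℕ) _
    rw [hd]
    have hs : ((1 : ℝ) / 2) ^ (i + 1) + (1 / 2) ^ (i + 1) = (1 / 2) ^ i := by ring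
    rw [hs, min_eq_right (hval i 0).2]
    rfl
  · exact (hd 0).trans (by norm_num)

/-- **Corollary.** The local consequences over models valued in `{MV_n : n ∈ ℕ}` and over
models valued in `[0,1]_Ł` coincide, whereas over transitive models the `{MV_n}`-valued
consequence is strictly stronger than the `[0,1]_Ł`-valued one. -/
theorem mv_vs_luk_consequence :
    (∀ (Γ : List (MFormula ℕ)) (φ : MFormula ℕ), ConsMVAll Γ φ ↔ ConsLukAll Γ φ) ∧
    (∀ (Γ : List (MFormula ℕ)) (φ : MFormula ℕ), ConsLukTrans Γ φ → ConsMVTrans Γ φ) ∧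
    (∃ (Γ : List (MFormula ℕ)) (φ : MFormula ℕ), ConsMVTrans Γ φ ∧ ¬ ConsLukTrans Γ φ) := by
  exact ⟨fun _ _ => ⟨consLukAll_of_consMVAll, fun h _ _ M _ => h M⟩,
    fun _ _ h _ _ M hT _ => h M hT,
    halvingPremises, .fZero, consMVTrans_halving, not_consLukTrans_halving⟩
end

section
/- Let 𝒜 be a class of weakly-archimedean linearly ordered FL_ew-algebras containing, for each n ∈ ℕ, a non-n-contractive algebra, and expand the modal language with the Monteiro–Baaz Δ operation. Then the set of formulas valid in all transitive safe 𝒜-Kripke models is undecidable, and the set of formulas valid in all finite transitive 𝒜-Kripke models is undecidable. -/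
/-- An FL_ew-algebra: a bounded lattice with a commutative monoid structure whose unit is the
top element, together with a residuum `himp` satisfying the residuation law. -/
class FLew (α : Type) extends Lattice α, BoundedOrder α, CommMonoid α where
  himp : α → α → α
  mul_le_iff_le_himp : ∀ {a b c : α}, a * b ≤ c ↔ a ≤ himp b c
  one_eq_top : (1 : α) = ⊤

namespace FLew

/-- The lattice order is linear. -/
def isChain (α : Type) [FLew α] : Prop := ∀ a b : α, a ≤ b ∨ b ≤ a

/-- Weakly archimedean: if `a ≤ bⁿ` for all `n` then `a * b = a`. -/
def weaklyArchimedean (α : Type) [FLew α] : Prop :=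
  ∀ a b : α, (∀ n : ℕ, a ≤ b ^ n) → a * b = a

/-- `n`-contractive: `a^(n+1) = aⁿ` for every `a`. -/
def contractive (α : Type) [FLew α] (n : ℕ) : Prop :=
  ∀ a : α, a ^ (n + 1) = a ^ n

end FLew

/-- Modal formulas with the Monteiro–Baaz `Δ` operation. -/
inductive MDFormula (V : Type) : Type
  | var : V → MDFormula V
  | fZero : MDFormula V
  | fOne : MDFormula V
  | fAnd : MDFormula V → MDFormula V → MDFormula V
  | fOr : MDFormula V → MDFormula V → MDFormula V
  | fMul : MDFormula V → MDFormula V → MDFormula V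
  | fImp : MDFormula V → MDFormula V → MDFormula V
  | fBox : MDFormula V → MDFormula V
  | fDia : MDFormula V → MDFormula V
  | fDelta : MDFormula V → MDFormula V
  deriving DecidableEq

namespace MDFormula

variable {V : Type}

def fNeg (φ : MDFormula V) : MDFormula V := .fImp φ .fZero

def fIff (φ ψ : MDFormula V) : MDFormula V := .fMul (.fImp φ ψ) (.fImp ψ φ)

end MDFormula

/-- A (safe) Kripke model over an FL_ew-algebra `α` for the language with `Δ`: the
evaluation is world-wise homomorphic on the propositional connectives, `□`/`◇` are the
infimum/supremum over accessible worlds (required to exist: safety), and `Δ` is interpreted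
world-wise by `Δ(a) = 1` if `a = 1` and `Δ(a) = 0` otherwise. -/
structure KDModel (α : Type) [FLew α] (V : Type) where
  W : Type
  nonempty : Nonempty W
  R : W → W → Prop
  e : W → MDFormula V → α
  e_zero : ∀ v, e v .fZero = ⊥
  e_one : ∀ v, e v .fOne = 1
  e_and : ∀ v φ ψ, e v (.fAnd φ ψ) = e v φ ⊓ e v ψ
  e_or : ∀ v φ ψ, e v (.fOr φ ψ) = e v φ ⊔ e v ψ
  e_mul : ∀ v φ ψ, e v (.fMul φ ψ) = e v φ * e v ψ
  e_imp : ∀ v φ ψ, e v (.fImp φ ψ) = FLew.himp (e v φ) (e v ψ)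
  e_box : ∀ v φ, IsGLB {a | ∃ w, R v w ∧ e w φ = a} (e v (.fBox φ))
  e_dia : ∀ v φ, IsLUB {a | ∃ w, R v w ∧ e w φ = a} (e v (.fDia φ))
  e_delta_one : ∀ v φ, e v φ = 1 → e v (.fDelta φ) = 1
  e_delta_ne : ∀ v φ, e v φ ≠ 1 → e v (.fDelta φ) = ⊥

namespace KDModel

variable {α V : Type} [FLew α]

/-- The accessibility relation is transitive. -/
def IsTrans (M : KDModel α V) : Prop := ∀ a b c : M.W, M.R a b → M.R b c → M.R a c

/-- The model is finite. -/
def IsFinite (M : KDModel α V) : Prop := Finite M.W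

end KDModel

/-- A numerical code for `Δ`-modal formulas over variables `ℕ`. -/
def codeD : MDFormula ℕ → ℕ
  | .var n => Nat.pair 0 n
  | .fZero => Nat.pair 1 0
  | .fOne => Nat.pair 2 0
  | .fAnd φ ψ => Nat.pair 3 (Nat.pair (codeD φ) (codeD ψ))
  | .fOr φ ψ => Nat.pair 4 (Nat.pair (codeD φ) (codeD ψ))
  | .fMul φ ψ => Nat.pair 5 (Nat.pair (codeD φ) (codeD ψ))
  | .fImp φ ψ => Nat.pair 6 (Nat.pair (codeD φ) (codeD ψ))
  | .fBox φ => Nat.pair 7 (codeD φ)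
  | .fDia φ => Nat.pair 8 (codeD φ)
  | .fDelta φ => Nat.pair 9 (codeD φ)

/-!
The halting problem reduces to refutability. For a counter machine and an input `n` there is a
formula `ψ` such that `¬ Δ ψ` is refuted in some transitive model over the class if and only if it
is refuted in a finite one, if and only if the machine halts on `n`. Hence neither set of valid
formulas is decidable.

A number `k` is represented by the power `c ^ k` of the value `c` of a fixed variable; `Δ` makes it
possible to assert that `φ` does not have value `1`, in particular that two values differ. The
worlds of a model are the stages of a run, each accessible from the later ones. Since all the
counters are nondecreasing along a run, the infimum `□ x` at a stage is the value of the power `x`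
at the preceding stage, so a propositional condition relating `x` and `□ x` describes one step.
Monotonicity costs nothing: a register is the difference of two monotone counters, and equality of
registers is equality of sums of counters, that is, of products of variables (`reach_low`).

*From runs to models* (`complete`). A halting run only involves exponents up to some `N`. An
element `c` with `c ^ (N + 1) ≠ c ^ N` has pairwise distinct powers up to `c ^ N`, and the finite
chain of stages is a countermodel.

*From models to runs* (`sound`). In an arbitrary model the value `z` of the product of all counter
variables satisfies `z ≰ z * c`, so by weak archimedeanity `z` is not below every power of `c`. A
world that is not initial satisfies `z ≤ c * □ z`, so induction on an exponent `k` with `z ≰ c ^ k`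
shows that every world encodes a reachable valuation (`world_sound`): the successors encode
valuations of totals less than `k`, so there is one of largest total, and as `□` is required to
commute with the product of the variables, this successor attains all the infima `□ x` at once.

The halting problem is brought into this form by compiling partial recursive functions into
register programs with loops (`impl_partrec`), and these into flat machines (`reach_iff_exec`).
-/

namespace DeltaUndec

/-! ### Register programs compute the partial recursive functions -/

/-- Programs over registers indexed by `ℕ`: `asg r l d` stores in register `r` the sum of the
registers listed in `l` plus the constant `d`, and `whl r t P` repeats `P` as long as the
registers `r` and `t` differ. -/
inductive Prog : Type
  | asg : ℕ → List ℕ → ℕ → Prog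
  | seq : Prog → Prog → Prog
  | whl : ℕ → ℕ → Prog → Prog

/-- The register contents after storing the sum of the registers in `l` plus `d` in register `r`. -/
def assign (s : ℕ → ℕ) (r : ℕ) (l : List ℕ) (d : ℕ) : ℕ → ℕ :=
  Function.update s r ((l.map s).sum + d)

/-- `Exec P s s'`: program `P` started on the registers `s` halts with the registers `s'`. -/
inductive Exec : Prog → (ℕ → ℕ) → (ℕ → ℕ) → Prop
  | asg (r l d s) : Exec (.asg r l d) s (assign s r l d)
  | seq {P Q s s' s''} : Exec P s s' → Exec Q s' s'' → Exec (.seq P Q) s s''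
  | whlDone {r t P s} : s r = s t → Exec (.whl r t P) s s
  | whlStep {r t P s s' s''} : s r ≠ s t → Exec P s s' → Exec (.whl r t P) s' s'' →
      Exec (.whl r t P) s s''

theorem exec_asg {r l d s s'} : Exec (.asg r l d) s s' ↔ s' = assign s r l d := by
  constructor
  · intro h; cases h; rfl
  · rintro rfl; exact .asg ..

theorem exec_seq {P Q s s''} : Exec (.seq P Q) s s'' ↔ ∃ s', Exec P s s' ∧ Exec Q s' s'' := by
  constructor
  · intro h; cases h with | seq h1 h2 => exact ⟨_, h1, h2⟩
  · rintro ⟨s', h1, h2⟩; exact .seq h1 h2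

theorem assign_same (s r l d) : assign s r l d r = (l.map s).sum + d := by simp [assign]

theorem assign_ne (s l d) {r q : ℕ} (h : q ≠ r) : assign s r l d q = s q := by simp [assign, h]

/-- Partial correctness of loops: an invariant of the body holds on exit, together with the
exit condition. -/
theorem whl_inv {r t : ℕ} {P : Prog} (Inv : (ℕ → ℕ) → Prop)
    (hP : ∀ s s', Inv s → s r ≠ s t → Exec P s s' → Inv s') {s s' : ℕ → ℕ}
    (h : Exec (.whl r t P) s s') (hs : Inv s) : Inv s' ∧ s' r = s' t := by
  generalize hQ : Prog.whl r t P = Q at h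
  induction h with
  | asg => cases hQ
  | seq => cases hQ
  | whlDone he => cases hQ; exact ⟨hs, he⟩
  | whlStep hne h1 _ _ ih => cases hQ; exact ih (hP _ _ hs hne h1) rfl

/-- Termination of loops: a body that halts, keeps the invariant and decreases `μ`. -/
theorem whl_term {r t : ℕ} {P : Prog} (Inv : (ℕ → ℕ) → Prop) (μ : (ℕ → ℕ) → ℕ)
    (hP : ∀ s, Inv s → s r ≠ s t → ∃ s', Exec P s s' ∧ Inv s' ∧ μ s' < μ s) (s : ℕ → ℕ)
    (hs : Inv s) : ∃ s', Exec (.whl r t P) s s' := by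
  induction hk : μ s using Nat.strong_induction_on generalizing s with
  | _ k ih =>
    by_cases h : s r = s t
    · exact ⟨s, .whlDone h⟩
    · obtain ⟨s', h1, h2, h3⟩ := hP s hs h
      obtain ⟨s'', h4⟩ := ih _ (hk ▸ h3) s' h2 rfl
      exact ⟨s'', .whlStep h h1 h4⟩

/-- The partial function `f` is implementable: for every placement `idx` of the arguments, every
output register `o` distinct from them and every bound `b` on both, some program writes the value
of `f` to `o`, leaves the other registers below `b` unchanged, and halts exactly where `f` is
defined. Registers from `b` on are free workspace with arbitrary initial contents, which is what
lets implementations be composed. -/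
def Impl {n : ℕ} (f : List.Vector ℕ n →. ℕ) : Prop :=
  ∀ (idx : Fin n → ℕ) (o b : ℕ), (∀ i, idx i < b) → o < b → (∀ i, idx i ≠ o) →
    ∃ P, ∀ (s : ℕ → ℕ) (v : List.Vector ℕ n), (∀ i, s (idx i) = v.get i) →
      (∀ s', Exec P s s' → s' o ∈ f v ∧ ∀ r < b, r ≠ o → s' r = s r) ∧
      ((f v).Dom → ∃ s', Exec P s s')

theorem impl_zero : Impl (n := 0) (fun _ => Part.some 0) := by
  intro idx o b _ ho _
  refine ⟨.asg o [] 0, fun s v _ => ⟨fun s' h => ?_, fun _ => ⟨_, .asg ..⟩⟩⟩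
  rw [exec_asg] at h; subst h
  exact ⟨by simp [assign_same], fun r _ hr => assign_ne _ _ _ hr⟩

theorem impl_succ : Impl (n := 1) (fun v => Part.some (Nat.succ v.head)) := by
  intro idx o b _ ho _
  refine ⟨.asg o [idx 0] 1, fun s v hv => ⟨fun s' h => ?_, fun _ => ⟨_, .asg ..⟩⟩⟩
  rw [exec_asg] at h; subst h
  exact ⟨by simp [assign_same, hv 0], fun r _ hr => assign_ne _ _ _ hr⟩

theorem impl_get {n : ℕ} (i : Fin n) : Impl (fun v => Part.some (v.get i)) := by
  intro idx o b _ ho _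
  refine ⟨.asg o [idx i] 0, fun s v hv => ⟨fun s' h => ?_, fun _ => ⟨_, .asg ..⟩⟩⟩
  rw [exec_asg] at h; subst h
  exact ⟨by simp [assign_same, hv i], fun r _ hr => assign_ne _ _ _ hr⟩

/-- A vector is a value of `mOfFn g` exactly when each entry is a value of the
corresponding `g i`. -/
theorem mem_mOfFn {n : ℕ} (g : Fin n → Part ℕ) (w : List.Vector ℕ n) :
    w ∈ List.Vector.mOfFn g ↔ ∀ i, w.get i ∈ g i := by
  induction n with
  | zero =>
    simp only [List.Vector.mOfFn, IsEmpty.forall_iff, iff_true]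
    rw [List.Vector.eq_nil w]; exact Part.mem_some _
  | succ n ih =>
    simp only [List.Vector.mOfFn, Part.bind_eq_bind, Part.mem_bind_iff, Part.pure_eq_some,
      Part.mem_some_iff, ih]
    constructor
    · rintro ⟨a, ha, u, hu, rfl⟩ i
      cases i using Fin.cases with
      | zero => simpa using ha
      | succ i => simpa using hu i
    · intro h
      refine ⟨w.head, by simpa using h 0, w.tail, fun i => ?_, by simp⟩
      have := h i.succ
      rwa [← List.Vector.get_tail_succ] at this

theorem impl_comp {m n : ℕ} {f : List.Vector ℕ n →. ℕ} (g : Fin n → List.Vector ℕ m →. ℕ)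
    (hf : Impl f) (hg : ∀ i, Impl (g i)) :
    Impl (fun v => (List.Vector.mOfFn fun i => g i v) >>= f) := by
  intro idx o b hb ho hio
  -- Successive subprograms store the value of `g i` in register `b + i`.
  have key : ∀ j ≤ n, ∃ P, ∀ (s : ℕ → ℕ) (v : List.Vector ℕ m), (∀ i, s (idx i) = v.get i) →
      (∀ s', Exec P s s' → (∀ i : Fin n, i.1 < j → s' (b + i) ∈ g i v) ∧ ∀ r < b, s' r = s r) ∧
      ((∀ i : Fin n, i.1 < j → (g i v).Dom) → ∃ s', Exec P s s') := by
    intro j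
    induction j with
    | zero =>
      intro _
      refine ⟨.asg b [] 0, fun s v _ => ⟨fun s' h => ⟨fun i hi => absurd hi (by omega), ?_⟩,
        fun _ => ⟨_, .asg ..⟩⟩⟩
      rw [exec_asg] at h; subst h
      exact fun r hr => assign_ne _ _ _ hr.ne
    | succ j ih =>
      intro hj
      obtain ⟨P, hP⟩ := ih (by omega)
      obtain ⟨Q, hQ⟩ := hg ⟨j, hj⟩ idx (b + j) (b + n) (fun i => by have := hb i; omega) (by omega)
        (fun i => by have := hb i; omega)
      refine ⟨.seq P Q, fun s v hv => ⟨fun s' h => ?_, fun h => ?_⟩⟩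
      · obtain ⟨s1, h1, h2⟩ := exec_seq.1 h
        obtain ⟨h3, h4⟩ := (hP s v hv).1 _ h1
        obtain ⟨h5, h6⟩ := (hQ s1 v (fun i => by rw [h4 _ (hb i), hv])).1 _ h2
        refine ⟨fun i hi => ?_, fun r hr => by rw [h6 r (by omega) (by omega), h4 r hr]⟩
        by_cases hij : i.1 = j
        · have : i = ⟨j, hj⟩ := Fin.ext hij
          subst this; exact h5
        · rw [h6 _ (by omega) (by omega)]
          exact h3 i (by omega)
      · obtain ⟨s1, h1⟩ := (hP s v hv).2 (fun i hi => h i (by omega))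
        have h4 := ((hP s v hv).1 _ h1).2
        obtain ⟨s2, h2⟩ := (hQ s1 v (fun i => by rw [h4 _ (hb i), hv])).2 (h _ (by simp))
        exact ⟨s2, .seq h1 h2⟩
  obtain ⟨P, hP⟩ := key n le_rfl
  obtain ⟨Q, hQ⟩ := hf (fun i => b + i) o (b + n) (fun i => by omega) (by omega)
    (fun i => by omega)
  refine ⟨.seq P Q, fun s v hv => ⟨fun s' h => ?_, fun h => ?_⟩⟩
  · obtain ⟨s1, h1, h2⟩ := exec_seq.1 h
    obtain ⟨h3, h4⟩ := (hP s v hv).1 _ h1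
    obtain ⟨h5, h6⟩ := (hQ s1 (List.Vector.ofFn fun i => s1 (b + i)) (by simp)).1 _ h2
    refine ⟨?_, fun r hr hro => by rw [h6 r (by omega) hro, h4 r hr]⟩
    refine Part.mem_bind_iff.2 ?_
    exact ⟨_, (mem_mOfFn _ _).2 fun i => by simpa using h3 i i.2, h5⟩
  · obtain ⟨y, hy⟩ := Part.dom_iff_mem.1 h
    obtain ⟨w, hw, hy⟩ := Part.mem_bind_iff.1 hy
    rw [mem_mOfFn] at hw
    obtain ⟨s1, h1⟩ := (hP s v hv).2 (fun i _ => Part.dom_iff_mem.2 ⟨_, hw i⟩)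
    obtain ⟨h3, h4⟩ := (hP s v hv).1 _ h1
    obtain ⟨s2, h2⟩ := (hQ s1 w (fun i => Part.mem_unique (h3 i i.2) (hw i))).2
      (Part.dom_iff_mem.2 ⟨_, hy⟩)
    exact ⟨s2, .seq h1 h2⟩

theorem impl_prec {n : ℕ} {f : List.Vector ℕ n → ℕ} {g : List.Vector ℕ (n + 2) → ℕ}
    (hf : Impl (fun v => Part.some (f v))) (hg : Impl (fun v => Part.some (g v))) :
    Impl (n := n + 1) (fun v => Part.some
      (v.head.rec (f v.tail) fun y IH => g (y ::ᵥ IH ::ᵥ v.tail))) := by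
  intro idx o b hb ho hio
  -- Register `b` counts up to the recursion argument, `b + 1` accumulates the value.
  obtain ⟨P, hP⟩ := hf (fun i => idx i.succ) (b + 1) (b + 3)
    (fun i => by have := hb i.succ; omega) (by omega) (fun i => by have := hb i.succ; omega)
  obtain ⟨Q, hQ⟩ := hg (Fin.cons b (Fin.cons (b + 1) fun i => idx i.succ)) (b + 2) (b + 3)
    (fun i => by
      refine Fin.cases ?_ (fun i => Fin.cases ?_ (fun i => ?_) i) i <;> simp
      have := hb i.succ; omega) (by omega)
    (fun i => by
      refine Fin.cases ?_ (fun i => Fin.cases ?_ (fun i => ?_) i) i <;> simp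
      have := hb i.succ; omega)
  let body : Prog := .seq Q (.seq (.asg (b + 1) [b + 2] 0) (.asg b [b] 1))
  refine ⟨.seq P (.seq (.asg b [] 0) (.seq (.whl b (idx 0) body) (.asg o [b + 1] 0))),
    fun s v hv => ?_⟩
  let F : ℕ → ℕ := fun k => k.rec (f v.tail) fun y IH => g (y ::ᵥ IH ::ᵥ v.tail)
  let Inv : (ℕ → ℕ) → Prop := fun u =>
    u (b + 1) = F (u b) ∧ u b ≤ v.head ∧ ∀ r < b, u r = s r
  have hv0 : s (idx 0) = v.head := by simpa using hv 0
  have hQ' : ∀ u, Inv u → (∀ u', Exec Q u u' → u' (b + 2) = F (u b + 1) ∧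
      ∀ r < b + 2, u' r = u r) ∧ ∃ u', Exec Q u u' := by
    rintro u ⟨h1, h2, h3⟩
    have := hQ u (u b ::ᵥ u (b + 1) ::ᵥ v.tail) (fun i => by
      refine Fin.cases ?_ (fun i => Fin.cases ?_ (fun i => ?_) i) i
      · simp
      · rw [List.Vector.get_cons_succ]; simp
      · simp only [Fin.cons_succ, List.Vector.get_cons_succ, List.Vector.get_tail_succ]
        rw [h3 _ (hb _), hv])
    refine ⟨fun u' h => ⟨?_, fun r hr => ((this.1 u' h).2 r (by omega) (by omega))⟩,
      this.2 trivial⟩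
    have h4 := (this.1 u' h).1
    rw [Part.mem_some_iff] at h4
    rw [h4, h1]
  have hbody : ∀ u u', Inv u → u b ≠ u (idx 0) → Exec body u u' →
      Inv u' ∧ u' b = u b + 1 := by
    intro u u' hu hne hE
    obtain ⟨u1, h1, h2⟩ := exec_seq.1 hE
    obtain ⟨u2, h2, h3⟩ := exec_seq.1 h2
    rw [exec_asg] at h2 h3
    obtain ⟨h4, h5⟩ := (hQ' u hu).1 u1 h1
    obtain ⟨i1, i2, i3⟩ := hu
    have hlt : u b < v.head := by
      rw [i3 _ (hb 0), hv0] at hne; omega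
    have e1 : u' b = u b + 1 := by
      rw [h3, assign_same, h2]
      simp [assign_ne, h5]
    refine ⟨⟨?_, by omega, fun r hr => ?_⟩, e1⟩
    · rw [e1, h3, assign_ne _ _ _ (by omega), h2, assign_same]
      simp [h4]
    · rw [h3, assign_ne _ _ _ (by omega), h2, assign_ne _ _ _ (by omega), h5 _ (by omega), i3 r hr]
  have hP' := hP s v.tail (fun i => by simp [hv])
  have hstart : ∀ u, Exec P s u → Inv (assign u b [] 0) := by
    intro u hu
    obtain ⟨h1, h2⟩ := hP'.1 u hu
    rw [Part.mem_some_iff] at h1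
    refine ⟨?_, ?_, fun r hr => ?_⟩
    · rw [assign_ne _ _ _ (by omega), assign_same, h1]; simp [F]
    · rw [assign_same]; simp
    · rw [assign_ne _ _ _ (by omega), h2 r (by omega) (by omega)]
  constructor
  · intro s' h
    obtain ⟨u1, h1, h⟩ := exec_seq.1 h
    obtain ⟨u2, h2, h⟩ := exec_seq.1 h
    obtain ⟨u3, h3, h⟩ := exec_seq.1 h
    rw [exec_asg] at h h2
    subst h h2
    obtain ⟨⟨i1, i2, i3⟩, i4⟩ := whl_inv Inv (fun u u' a b c => (hbody u u' a b c).1) h3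
      (hstart _ h1)
    rw [i3 _ (hb 0), hv0] at i4
    refine ⟨?_, fun r hr hro => by rw [assign_ne _ _ _ hro, i3 r hr]⟩
    rw [assign_same, Part.mem_some_iff]
    simp [i1, i4, F]
  · intro _
    obtain ⟨u1, h1⟩ := hP'.2 trivial
    obtain ⟨u3, h3⟩ := whl_term (r := b) (t := idx 0) (P := body) Inv (fun u => v.head - u b)
      (fun u hu hne => by
        obtain ⟨w, hw⟩ := (hQ' u hu).2
        have hE : Exec body u _ := .seq hw (.seq (.asg ..) (.asg ..))
        obtain ⟨h4, h5⟩ := hbody u _ hu hne hE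
        refine ⟨_, hE, h4, ?_⟩
        have := h4.2.1
        omega) _ (hstart _ h1)
    exact ⟨_, .seq h1 (.seq (.asg ..) (.seq h3 (.asg ..)))⟩

theorem impl_rfind {n : ℕ} {f : List.Vector ℕ (n + 1) → ℕ}
    (hf : Impl (fun v => Part.some (f v))) :
    Impl (fun v => Nat.rfind fun k => Part.some (decide (f (k ::ᵥ v) = 0))) := by
  intro idx o b hb ho hio
  -- Register `b` is the candidate, `b + 1` the value of `f` there, and `b + 2` holds zero.
  obtain ⟨P, hP⟩ := hf (Fin.cons b idx) (b + 1) (b + 3)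
    (fun i => by
      refine Fin.cases ?_ (fun i => ?_) i <;> simp
      have := hb i; omega) (by omega)
    (fun i => by
      refine Fin.cases ?_ (fun i => ?_) i <;> simp
      have := hb i; omega)
  let body : Prog := .seq (.asg b [b] 1) P
  refine ⟨.seq (.asg (b + 2) [] 0) (.seq (.asg b [] 0) (.seq P
    (.seq (.whl (b + 1) (b + 2) body) (.asg o [b] 0)))), fun s v hv => ?_⟩
  let Inv : (ℕ → ℕ) → Prop := fun u =>
    u (b + 1) = f (u b ::ᵥ v) ∧ u (b + 2) = 0 ∧ (∀ k < u b, f (k ::ᵥ v) ≠ 0) ∧ ∀ r < b, u r = s r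
  have hP' : ∀ u, (∀ r < b, u r = s r) → (∀ u', Exec P u u' → u' (b + 1) = f (u b ::ᵥ v) ∧
      u' (b + 2) = u (b + 2) ∧ ∀ r < b + 1, u' r = u r) ∧ ∃ u', Exec P u u' := by
    intro u h3
    have := hP u (u b ::ᵥ v) (fun i => by
      refine Fin.cases ?_ (fun i => ?_) i
      · simp
      · simp only [Fin.cons_succ, List.Vector.get_cons_succ]
        rw [h3 _ (hb _), hv])
    refine ⟨fun u' h => ⟨?_, (this.1 u' h).2 _ (by omega) (by omega),
      fun r hr => ((this.1 u' h).2 r (by omega) (by omega))⟩, this.2 trivial⟩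
    simpa using (this.1 u' h).1
  have hbody : ∀ u u', Inv u → u (b + 1) ≠ u (b + 2) → Exec body u u' →
      Inv u' ∧ u' b = u b + 1 := by
    rintro u u' ⟨i1, i2, i3, i4⟩ hne hE
    obtain ⟨u1, h1, h2⟩ := exec_seq.1 hE
    rw [exec_asg] at h1
    have e0 : ∀ r < b, u1 r = s r := fun r hr => by rw [h1, assign_ne _ _ _ (by omega), i4 r hr]
    obtain ⟨h4, h5, h6⟩ := (hP' u1 e0).1 u' h2
    have e1 : u1 b = u b + 1 := by rw [h1, assign_same]; simp
    have e2 : u' b = u b + 1 := by rw [h6 _ (by omega), e1]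
    refine ⟨⟨by rw [h4, e1, e2], ?_, fun k hk => ?_, fun r hr => ?_⟩, e2⟩
    · rw [h5, h1, assign_ne _ _ _ (by omega), i2]
    · rcases Nat.lt_succ_iff_lt_or_eq.1 (e2 ▸ hk : k < u b + 1) with h | h
      · exact i3 k h
      · rw [h, ← i1, ← i2]; exact hne
    · rw [h6 _ (by omega), e0 r hr]
  let s0 := assign (assign s (b + 2) [] 0) b [] 0
  have hs0 : ∀ r < b, s0 r = s r := fun r hr => by
    simp only [s0]
    rw [assign_ne _ _ _ (by omega), assign_ne _ _ _ (by omega)]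
  have hs0b : s0 b = 0 := by simp [s0, assign_same]
  have hstart : ∀ u, Exec P s0 u → Inv u := by
    intro u hu
    obtain ⟨h4, h5, h6⟩ := (hP' s0 hs0).1 u hu
    have e : u b = 0 := by rw [h6 _ (by omega), hs0b]
    refine ⟨by rw [h4, hs0b, e], ?_, fun k hk => by omega, fun r hr => by
      rw [h6 _ (by omega), hs0 r hr]⟩
    rw [h5]; simp only [s0]; rw [assign_ne _ _ _ (by omega), assign_same]; simp
  constructor
  · intro s' h
    obtain ⟨u1, h1, h⟩ := exec_seq.1 h
    obtain ⟨u2, h2, h⟩ := exec_seq.1 h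
    obtain ⟨u3, h3, h⟩ := exec_seq.1 h
    obtain ⟨u4, h4, h5⟩ := exec_seq.1 h
    rw [exec_asg] at h1 h2 h5
    subst h1
    subst h2
    subst h5
    obtain ⟨⟨i1, i2, i3, i4⟩, i5⟩ := whl_inv Inv (fun u u' a b c => (hbody u u' a b c).1) h4
      (hstart _ h3)
    refine ⟨?_, fun r hr hro => by rw [assign_ne _ _ _ hro, i4 r hr]⟩
    rw [assign_same]
    refine Nat.mem_rfind.2 ?_
    simp only [List.map_cons, List.map_nil, List.sum_cons, List.sum_nil, add_zero]
    constructor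
    · rw [Part.mem_some_iff, ← i1, i5, i2]; simp
    · intro k hk
      rw [Part.mem_some_iff]
      simpa using i3 k hk
  · intro hd
    obtain ⟨N, hN⟩ := Part.dom_iff_mem.1 hd
    replace hN := Nat.mem_rfind.1 hN
    have hN0 : f (N ::ᵥ v) = 0 := by simpa using hN.1
    obtain ⟨u1, h1⟩ := (hP' s0 hs0).2
    obtain ⟨u3, h3⟩ := whl_term (r := b + 1) (t := b + 2) (P := body) Inv (fun u => N - u b)
      (fun u hu hne => by
        have e0 : ∀ r < b, assign u b [b] 1 r = s r := fun r hr => by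
          rw [assign_ne _ _ _ (by omega), hu.2.2.2 r hr]
        obtain ⟨w, hw⟩ := (hP' _ e0).2
        have hE : Exec body u _ := .seq (.asg ..) hw
        obtain ⟨h4, h5⟩ := hbody u _ hu hne hE
        refine ⟨_, hE, h4, ?_⟩
        have : ¬ N < w b := fun h => h4.2.2.1 N h hN0
        omega) _ (hstart _ h1)
    exact ⟨_, .seq (.asg ..) (.seq (.asg ..) (.seq h1 (.seq h3 (.asg ..))))⟩

theorem impl_prim {n : ℕ} {f : List.Vector ℕ n → ℕ} (hf : Nat.Primrec' f) :
    Impl (fun v => Part.some (f v)) := by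
  induction hf with
  | zero => exact impl_zero
  | succ => exact impl_succ
  | get i => exact impl_get i
  | comp g _ _ hf hg =>
    have := impl_comp _ hf hg
    simpa [Vector.mOfFn_part_some] using this
  | prec _ _ hf hg => exact impl_prec hf hg

theorem impl_partrec {n : ℕ} {f : List.Vector ℕ n →. ℕ} (hf : Nat.Partrec' f) : Impl f := by
  induction hf with
  | prim h => exact impl_prim h
  | comp g _ _ hf hg => exact impl_comp g hf hg
  | rfind _ hf => exact impl_rfind hf


/-! ### Flat machines with numbered control locations -/

/-- A transition of a flat machine, whose configurations pair a control location with register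
contents. It leads from location `src` to location `dst`; it may fire when the registers `ta` and
`tb` are equal (if `pos = true`) or different (if `pos = false`), and it stores the sum of the
registers `args` plus `const` in register `tgt`. -/
structure Edge where
  src : ℕ
  pos : Bool
  ta : ℕ
  tb : ℕ
  tgt : ℕ
  args : List ℕ
  const : ℕ
  dst : ℕ

namespace Edge

/-- The edge `e` may fire in the configuration `p`. -/
def Enabled (e : Edge) (p : ℕ × (ℕ → ℕ)) : Prop :=
  p.1 = e.src ∧ ((p.2 e.ta = p.2 e.tb) ↔ e.pos = true)

/-- The configuration reached by firing `e` with registers `s`. -/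
def run (e : Edge) (s : ℕ → ℕ) : ℕ × (ℕ → ℕ) := (e.dst, assign s e.tgt e.args e.const)

/-- A conditional jump from `i` to `j`; its assignment copies register `0` to itself. -/
def jmp (i : ℕ) (b : Bool) (r t j : ℕ) : Edge := ⟨i, b, r, t, 0, [0], 0, j⟩

end Edge

theorem assign_nop (s : ℕ → ℕ) : assign s 0 [0] 0 = s := by simp [assign]

/-- One step of the flat machine with edge set `E`. -/
def FStep (E : List Edge) (p q : ℕ × (ℕ → ℕ)) : Prop :=
  ∃ e ∈ E, e.Enabled p ∧ q = e.run p.2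

namespace Prog

/-- The number of control locations occupied by a program, its exit not counted. -/
def size : Prog → ℕ
  | asg _ _ _ => 1
  | seq P Q => P.size + Q.size
  | whl _ _ P => P.size + 2

/-- The edges of the flat machine simulating a program placed at the locations from `i` on, with
exit location `i + P.size`. An unconditional edge compares register `0` with itself. -/
def flat : Prog → ℕ → List Edge
  | asg r l d, i => [⟨i, true, 0, 0, r, l, d, i + 1⟩]
  | seq P Q, i => P.flat i ++ Q.flat (i + P.size)
  | whl r t P, i => Edge.jmp i false r t (i + 1) :: Edge.jmp i true r t (i + (P.size + 2)) ::
      Edge.jmp (i + 1 + P.size) true 0 0 i :: P.flat (i + 1)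

theorem src_flat (P : Prog) (i : ℕ) {e : Edge} (he : e ∈ P.flat i) :
    i ≤ e.src ∧ e.src < i + P.size := by
  induction P generalizing i with
  | asg => simp only [flat, List.mem_singleton] at he; subst he; simp [size]
  | seq P Q ihP ihQ =>
    simp only [flat, List.mem_append] at he
    rcases he with he | he
    · have := ihP _ he; simp only [size]; omega
    · have := ihQ _ he; simp only [size]; omega
  | whl r t P ih =>
    simp only [flat, List.mem_cons] at he
    rcases he with rfl | rfl | rfl | he
    · simp [Edge.jmp, size]
    · simp [Edge.jmp, size]
    · simp only [Edge.jmp, size]; omega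
    · have := ih _ he; simp only [size]; omega

end Prog

/-- Every execution of a program is simulated by any flat machine containing its edges. -/
theorem exec_reach {E : List Edge} {P : Prog} {s s' : ℕ → ℕ} (h : Exec P s s') (i : ℕ)
    (hE : ∀ e ∈ P.flat i, e ∈ E) :
    Relation.ReflTransGen (FStep E) (i, s) (i + P.size, s') := by
  induction h generalizing i with
  | asg r l d s =>
    refine .single ⟨_, hE _ (by simp [Prog.flat]; rfl), ?_, ?_⟩
    · simp [Edge.Enabled]
    · simp [Edge.run, Prog.size]
  | @seq P Q s s' s'' _ _ ih1 ih2 =>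
    refine (ih1 i fun e he => hE e (by simp [Prog.flat, he])).trans ?_
    have := ih2 (i + P.size) fun e he => hE e (by simp [Prog.flat, he])
    rwa [add_assoc] at this
  | @whlDone r t P s he =>
    refine .single ⟨Edge.jmp i true r t (i + (P.size + 2)), hE _ (by simp [Prog.flat]), ?_, ?_⟩
    · simpa [Edge.Enabled, Edge.jmp] using he
    · simp [Edge.run, Edge.jmp, assign_nop, Prog.size]
  | @whlStep r t P s s' s'' hne _ _ ih1 ih2 =>
    refine .head ⟨Edge.jmp i false r t (i + 1), hE _ (by simp [Prog.flat]), ?_, rfl⟩ ?_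
    · simpa [Edge.Enabled, Edge.jmp] using hne
    · simp only [Edge.run, Edge.jmp, assign_nop]
      refine (ih1 (i + 1) fun e he => hE e (by simp [Prog.flat, he])).trans ?_
      refine .head ⟨Edge.jmp (i + 1 + P.size) true 0 0 i, hE _ (by simp [Prog.flat]), ?_, rfl⟩ ?_
      · simp [Edge.Enabled, Edge.jmp]
      · simp only [Edge.run, Edge.jmp, assign_nop]
        exact ih2 i hE

/-- The flat machine reaches location `fin` from the given configuration in the given number of
steps. -/
inductive HaltsIn (E : List Edge) (fin : ℕ) : ℕ → ℕ × (ℕ → ℕ) → Prop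
  | done (s) : HaltsIn E fin 0 (fin, s)
  | step {k p q} : FStep E p q → HaltsIn E fin k q → HaltsIn E fin (k + 1) p

/-- Conversely, a flat machine whose edges leaving the segment of `P` all belong to `P.flat i` can
reach a location beyond that segment only by completing an execution of `P`. The step count is
what the induction for loops runs on. -/
theorem haltsIn_exec {E : List Edge} {fin : ℕ} (P : Prog) (k i : ℕ) (s : ℕ → ℕ)
    (hE : ∀ e ∈ E, i ≤ e.src → e.src < i + P.size → e ∈ P.flat i) (hfin : i + P.size ≤ fin)
    (h : HaltsIn E fin k (i, s)) :
    ∃ s' k', k' ≤ k ∧ Exec P s s' ∧ HaltsIn E fin k' (i + P.size, s') := by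
  induction P generalizing k i s with
  | asg r l d =>
    simp only [Prog.size] at *
    cases h with
    | done => omega
    | @step k p q hs hq =>
      obtain ⟨e, he, ⟨h1, h2⟩, rfl⟩ := hs
      have h1 : i = e.src := h1
      have := hE e he (by omega) (by omega)
      simp only [Prog.flat, List.mem_singleton] at this
      subst this
      exact ⟨_, k, by omega, .asg .., hq⟩
  | seq P Q ihP ihQ =>
    simp only [Prog.size] at *
    have hE1 : ∀ e ∈ E, i ≤ e.src → e.src < i + P.size → e ∈ P.flat i := by
      intro e he h1 h2
      have := hE e he h1 (by omega)
      simp only [Prog.flat, List.mem_append] at this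
      rcases this with h | h
      · exact h
      · have := Q.src_flat _ h; omega
    have hE2 : ∀ e ∈ E, i + P.size ≤ e.src → e.src < i + P.size + Q.size →
        e ∈ Q.flat (i + P.size) := by
      intro e he h1 h2
      have := hE e he (by omega) (by omega)
      simp only [Prog.flat, List.mem_append] at this
      rcases this with h | h
      · have := P.src_flat _ h; omega
      · exact h
    obtain ⟨s1, k1, hk1, x1, y1⟩ := ihP k i s hE1 (by omega) h
    obtain ⟨s2, k2, hk2, x2, y2⟩ := ihQ k1 _ s1 hE2 (by omega) y1
    exact ⟨s2, k2, by omega, .seq x1 x2, by rwa [← add_assoc]⟩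
  | whl r t P ih =>
    simp only [Prog.size] at *
    have hE1 : ∀ e ∈ E, i + 1 ≤ e.src → e.src < i + 1 + P.size → e ∈ P.flat (i + 1) := by
      intro e he h1 h2
      have := hE e he (by omega) (by omega)
      simp only [Prog.flat, List.mem_cons] at this
      rcases this with rfl | rfl | rfl | h
      · simp only [Edge.jmp] at h1; omega
      · simp only [Edge.jmp] at h1; omega
      · simp only [Edge.jmp] at h2; omega
      · exact h
    induction k using Nat.strong_induction_on generalizing s with
    | _ k ihk =>
      cases h with
      | done => omega
      | @step k p q hs hq =>
        obtain ⟨e, he, ⟨h1, h2⟩, rfl⟩ := hs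
        have h1 : i = e.src := h1
        have := hE e he (by omega) (by omega)
        simp only [Prog.flat, List.mem_cons] at this
        rcases this with rfl | rfl | rfl | h
        · simp only [Edge.run, Edge.jmp, assign_nop] at hq h2
          obtain ⟨s1, k1, hk1, x1, y1⟩ := ih k _ s hE1 (by omega) hq
          cases y1 with
          | done => omega
          | @step k1 p q hs hq =>
            obtain ⟨e, he, ⟨h1', h2'⟩, rfl⟩ := hs
            have h1' : i + 1 + P.size = e.src := h1'
            have := hE e he (by omega) (by omega)
            simp only [Prog.flat, List.mem_cons] at this
            rcases this with rfl | rfl | rfl | h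
            · simp only [Edge.jmp] at h1'; omega
            · simp only [Edge.jmp] at h1'; omega
            · simp only [Edge.run, Edge.jmp, assign_nop] at hq
              obtain ⟨s2, k2, hk2, x2, y2⟩ := ihk k1 (by omega) s1 hq
              exact ⟨s2, k2, by omega, .whlStep (by simpa using h2) x1 x2, y2⟩
            · have := P.src_flat _ h; omega
        · simp only [Edge.run, Edge.jmp, assign_nop] at hq h2
          exact ⟨s, k, by omega, .whlDone (by simpa using h2), hq⟩
        · simp only [Edge.jmp] at h1; omega
        · have := P.src_flat _ h; omega

/-- The flat machine of `P` reaches its exit exactly when `P` halts. -/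
theorem reach_iff_exec (P : Prog) (s : ℕ → ℕ) :
    (∃ s', Relation.ReflTransGen (FStep (P.flat 0)) (0, s) (P.size, s')) ↔ ∃ s', Exec P s s' := by
  constructor
  · rintro ⟨s', h⟩
    have : ∃ k, HaltsIn (P.flat 0) P.size k (0, s) := by
      generalize (0, s) = p at h
      induction h using Relation.ReflTransGen.head_induction_on with
      | refl => exact ⟨0, .done _⟩
      | head h _ ih => obtain ⟨k, hk⟩ := ih; exact ⟨k + 1, .step h hk⟩
    obtain ⟨k, hk⟩ := this
    obtain ⟨s', _, _, h, _⟩ := haltsIn_exec P k 0 s (fun e he _ _ => he) (by omega) hk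
    exact ⟨s', h⟩
  · rintro ⟨s', h⟩
    exact ⟨s', by simpa using exec_reach h 0 fun e he => he⟩

/-! ### Monotone counter machines -/

/-- The value of register `r` is encoded as counter `cA r` minus counter `cB r`. The control
location is counter `0` minus counter `1`. -/
def cA (r : ℕ) : ℕ := 2 * r + 2

/-- The subtracted counter of register `r`. -/
def cB (r : ℕ) : ℕ := 2 * r + 3

/-- A linear form with natural coefficients, `(l, d)` standing for the sum of the counters listed
in `l` plus `d`. It is used multiplicatively, as the exponent of a monomial in `c`. -/
abbrev Mono : Type := List ℕ × ℕ

/-- The value of a linear form at a counter valuation. -/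
def Mono.val (m : Mono) (x : ℕ → ℕ) : ℕ := (m.1.map x).sum + m.2

namespace Edge

/-- The new value of counter `j` after firing `e`. Only differences of counters matter, so the two
counters of the target register are both increased by their common old sum; this makes every
counter nondecreasing and counters `0` and `1` strictly increasing. -/
def upd (e : Edge) (j : ℕ) : Mono :=
  if j = 0 then ([0], e.dst + 1)
  else if j = 1 then ([1], e.src + 1)
  else if j = cA e.tgt then (cA e.tgt :: cB e.tgt :: e.args.map cA, e.const)
  else if j = cB e.tgt then (cA e.tgt :: cB e.tgt :: e.args.map cB, 0)
  else ([j], 0)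

/-- The condition for firing `e`, expressed through sums of counters. -/
def Guard (e : Edge) (x : ℕ → ℕ) : Prop :=
  x 0 = x 1 + e.src ∧ (x (cA e.ta) + x (cB e.tb) = x (cA e.tb) + x (cB e.ta) ↔ e.pos = true)

/-- The counter valuation after firing `e`. -/
def next (e : Edge) (x : ℕ → ℕ) : ℕ → ℕ := fun j => (e.upd j).val x

end Edge

/-- One step of the counter machine. -/
def LStep (E : List Edge) (x y : ℕ → ℕ) : Prop := ∃ e ∈ E, e.Guard x ∧ y = e.next x

/-- The counter valuation `x` represents the flat configuration `p`. -/
def Rep (x : ℕ → ℕ) (p : ℕ × (ℕ → ℕ)) : Prop :=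
  x 0 = x 1 + p.1 ∧ ∀ r, x (cA r) = x (cB r) + p.2 r

theorem rep_guard {x : ℕ → ℕ} {p : ℕ × (ℕ → ℕ)} (h : Rep x p) (e : Edge) :
    e.Guard x ↔ e.Enabled p := by
  obtain ⟨h1, h2⟩ := h
  have ha := h2 e.ta
  have hb := h2 e.tb
  unfold Edge.Guard Edge.Enabled
  have e1 : x 0 = x 1 + e.src ↔ p.1 = e.src := by omega
  have e2 : x (cA e.ta) + x (cB e.tb) = x (cA e.tb) + x (cB e.ta) ↔ p.2 e.ta = p.2 e.tb := by
    omega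
  rw [e1, e2]

theorem rep_next {x : ℕ → ℕ} {p : ℕ × (ℕ → ℕ)} (h : Rep x p) (e : Edge) (hp : p.1 = e.src) :
    Rep (e.next x) (e.run p.2) := by
  obtain ⟨h1, h2⟩ := h
  have hsum : ∀ l : List ℕ, ((l.map cA).map x).sum = ((l.map cB).map x).sum + (l.map p.2).sum := by
    intro l
    induction l with
    | nil => simp
    | cons a l ih =>
      have := h2 a
      simp only [List.map_cons, List.sum_cons]; omega
  refine ⟨?_, fun r => ?_⟩
  · simp [Edge.next, Edge.upd, Mono.val, Edge.run]; omega
  · by_cases hr : r = e.tgt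
    · have := hsum e.args
      have := h2 r
      have a1 : e.upd (cA r) = (cA r :: cB r :: e.args.map cA, e.const) := by
        simp [Edge.upd, hr, cA, cB]
      have a2 : e.upd (cB r) = (cA r :: cB r :: e.args.map cB, 0) := by
        rw [Edge.upd, if_neg (by simp [cB]), if_neg (by simp [cB]),
          if_neg (by simp only [cA, cB]; omega), if_pos (by rw [hr]), ← hr]
      simp only [Edge.next, a1, a2, Mono.val, Edge.run, List.map_cons, List.sum_cons]
      rw [hr, assign_same, ← hr]
      omega
    · have a1 : e.upd (cA r) = ([cA r], 0) := by
        rw [Edge.upd, if_neg (by simp [cA]), if_neg (by simp [cA]),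
          if_neg (by simp only [cA]; omega), if_neg (by simp only [cA, cB]; omega)]
      have a2 : e.upd (cB r) = ([cB r], 0) := by
        rw [Edge.upd, if_neg (by simp [cB]), if_neg (by simp [cB]),
          if_neg (by simp only [cA, cB]; omega), if_neg (by simp only [cB]; omega)]
      simp only [Edge.next, a1, a2, Mono.val, Edge.run]
      rw [assign_ne _ _ _ hr]
      simpa using h2 r

theorem le_next (e : Edge) (x : ℕ → ℕ) (j : ℕ) : x j ≤ e.next x j := by
  unfold Edge.next Edge.upd Mono.val
  split_ifs <;> simp <;> grind

theorem next_zero (e : Edge) (x : ℕ → ℕ) : x 0 < e.next x 0 := by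
  simp [Edge.next, Edge.upd, Mono.val]

/-- The counters of the initial configuration: counter `2`, the positive part of register `0`, is
`n`, the others vanish. -/
def init (n j : ℕ) : ℕ := if j = 2 then n else 0

/-- The initial registers: register `0` holds `n`, the others vanish. -/
def input (n j : ℕ) : ℕ := if j = 0 then n else 0

theorem rep_init (n : ℕ) : Rep (init n) (0, input n) := by
  refine ⟨by simp [init], fun r => ?_⟩
  by_cases hr : r = 0 <;> simp [init, input, cA, cB, hr]

/-- The counter machine and the flat machine reach location `fin` on the same inputs. -/
theorem reach_low {E : List Edge} {n fin : ℕ} :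
    (∃ x, Relation.ReflTransGen (LStep E) (init n) x ∧ x 0 = x 1 + fin) ↔
      ∃ s', Relation.ReflTransGen (FStep E) (0, input n) (fin, s') := by
  constructor
  · rintro ⟨x, h, hx⟩
    have : ∃ p, Rep x p ∧ Relation.ReflTransGen (FStep E) (0, input n) p := by
      clear hx
      induction h with
      | refl => exact ⟨_, rep_init n, .refl⟩
      | tail _ hs ih =>
        obtain ⟨p, hp, hr⟩ := ih
        obtain ⟨e, he, hg, rfl⟩ := hs
        have hg' := (rep_guard hp e).1 hg
        exact ⟨_, rep_next hp e hg'.1, hr.tail ⟨e, he, hg', rfl⟩⟩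
    obtain ⟨⟨q, s⟩, ⟨h1, _⟩, hr⟩ := this
    obtain rfl : q = fin := by simp only at h1; omega
    exact ⟨s, hr⟩
  · rintro ⟨s', h⟩
    have : ∃ x, Rep x (fin, s') ∧ Relation.ReflTransGen (LStep E) (init n) x := by
      generalize (fin, s') = p at h
      induction h with
      | refl => exact ⟨_, rep_init n, .refl⟩
      | tail _ hs ih =>
        obtain ⟨x, hx, hr⟩ := ih
        obtain ⟨e, he, hg, rfl⟩ := hs
        exact ⟨_, rep_next hx e hg.1, hr.tail ⟨e, he, (rep_guard hx e).2 hg, rfl⟩⟩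
    obtain ⟨x, hx, hr⟩ := this
    exact ⟨x, hr, hx.1⟩

/-- All counters relevant to the guard of `e`, and to the update of the first `K` counters, are
among the first `K`. -/
structure Edge.Bounded (e : Edge) (K : ℕ) : Prop where
  aa : cA e.ta < K
  ab : cA e.tb < K
  ba : cB e.ta < K
  bb : cB e.tb < K
  upd : ∀ j < K, ∀ t ∈ (e.upd j).1, t < K

theorem exists_bound (E : List Edge) : ∃ K, 2 ≤ K ∧ ∀ e ∈ E, e.Bounded K := by
  have : ∃ R, ∀ e ∈ E, e.ta < R ∧ e.tb < R ∧ e.tgt < R ∧ ∀ t ∈ e.args, t < R := by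
    induction E with
    | nil => exact ⟨0, by simp⟩
    | cons e E ih =>
      obtain ⟨R, hR⟩ := ih
      refine ⟨R + e.ta + e.tb + e.tgt + e.args.sum + 1, fun e' he' => ?_⟩
      rcases List.mem_cons.1 he' with rfl | h
      · refine ⟨by omega, by omega, by omega, fun t ht => ?_⟩
        have := List.le_sum_of_mem ht
        omega
      · obtain ⟨h1, h2, h0, h3⟩ := hR _ h
        exact ⟨by omega, by omega, by omega, fun t ht => by have := h3 t ht; omega⟩
  obtain ⟨R, hR⟩ := this
  refine ⟨2 * R + 2, by omega, fun e he => ?_⟩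
  obtain ⟨h1, h2, h0, h3⟩ := hR e he
  refine ⟨by simp only [cA]; omega, by simp only [cA]; omega, by simp only [cB]; omega,
    by simp only [cB]; omega, fun j hj t ht => ?_⟩
  unfold Edge.upd at ht
  split_ifs at ht
  · simp at ht; omega
  · simp at ht; omega
  · simp only [List.mem_cons, List.mem_map] at ht
    rcases ht with rfl | rfl | ⟨a, ha, rfl⟩
    · simp only [cA]; omega
    · simp only [cB]; omega
    · have := h3 a ha; simp only [cA]; omega
  · simp only [List.mem_cons, List.mem_map] at ht
    rcases ht with rfl | rfl | ⟨a, ha, rfl⟩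
    · simp only [cA]; omega
    · simp only [cB]; omega
    · have := h3 a ha; simp only [cB]; omega
  · simp at ht; omega

/-! ### Arithmetic in FL_ew-algebras -/

section Algebra

variable {α : Type} [FLew α]

theorem le_one' (a : α) : a ≤ 1 := by rw [FLew.one_eq_top]; exact le_top

theorem one_le' {a : α} : 1 ≤ a ↔ a = 1 := ⟨fun h => le_antisymm (le_one' a) h, fun h => h.ge⟩

theorem himp_eq_one {a b : α} : FLew.himp a b = 1 ↔ a ≤ b := by
  rw [← one_le', ← FLew.mul_le_iff_le_himp, one_mul]

theorem mul_le_mul_r {a b : α} (h : a ≤ b) (c : α) : a * c ≤ b * c :=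
  FLew.mul_le_iff_le_himp.2 (h.trans (FLew.mul_le_iff_le_himp.1 le_rfl))

theorem mul_mono' {a b c d : α} (h : a ≤ b) (h' : c ≤ d) : a * c ≤ b * d :=
  (mul_le_mul_r h c).trans (by rw [mul_comm b c, mul_comm b d]; exact mul_le_mul_r h' b)

theorem pow_anti (c : α) {i j : ℕ} (h : i ≤ j) : c ^ j ≤ c ^ i := by
  obtain ⟨k, rfl⟩ := Nat.exists_eq_add_of_le h
  rw [pow_add]
  simpa using mul_mono' (le_refl (c ^ i)) (le_one' (c ^ k))

/-- If multiplying a power of `c` by `c` once more changes nothing, all later powers agree. -/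
theorem pow_collapse {c : α} {i N : ℕ} (hi : i ≤ N) (h : c ^ i ≤ c ^ i * c) :
    c ^ (N + 1) = c ^ N := by
  obtain ⟨k, rfl⟩ := Nat.exists_eq_add_of_le hi
  refine le_antisymm (pow_anti c (by omega)) ?_
  have := mul_le_mul_r h (c ^ k)
  rw [← pow_add] at this
  refine this.trans (le_of_eq ?_)
  rw [pow_succ, pow_add, mul_right_comm]

end Algebra

/-! ### The formulas encoding a run -/

section Formulas

/-- Modal formulas with `Δ` over the variables `ℕ`. -/
abbrev Form : Type := MDFormula ℕ

open MDFormula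

/-- The variable whose value `c` serves as base of the encoding: the number `k` is encoded
as `c ^ k`. -/
def fC : Form := .var 0

/-- The variable whose value at a world encodes counter `j`. -/
def fX (j : ℕ) : Form := .var (j + 1)

/-- The power `fC ^ d`. -/
def cpow : ℕ → Form
  | 0 => .fOne
  | d + 1 => .fMul (cpow d) fC

/-- The monomial encoding the linear form `m`, with `g t` in place of counter `t`. -/
def mono (g : ℕ → Form) (m : Mono) : Form := m.1.foldr (fun t φ => .fMul (g t) φ) (cpow m.2)

/-- Conjunction of a list of formulas. -/
def conj (l : List Form) : Form := l.foldr .fAnd .fOne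

/-- Disjunction of a list of formulas. -/
def disj (l : List Form) : Form := l.foldr .fOr .fZero

/-- `¬ Δ φ`: has value `1` exactly where `φ` does not have value `1`. -/
def notOne (φ : Form) : Form := fNeg (.fDelta φ)

/-- `φ` and `ψ` have the same value. -/
def eqF (φ ψ : Form) : Form := .fAnd (.fImp φ ψ) (.fImp ψ φ)

/-- Multiplying the value of `φ` by `c` makes it strictly smaller; for a power of `c` this says
that its exponent is determined by its value. -/
def strict (φ : Form) : Form := notOne (.fImp φ (.fMul φ fC))

/-- `φ` and `ψ` have the same value, and this value is strict. -/
def eqS (φ ψ : Form) : Form := .fAnd (eqF φ ψ) (strict φ)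

/-- Counter `j` at the preceding stage of the run: `□` takes the infimum over the accessible worlds,
which is attained at the latest earlier stage because counters never decrease. -/
def fbX (j : ℕ) : Form := .fBox (fX j)

/-- The sum of the first `K` counters. -/
def total (K : ℕ) : Mono := (List.range K, 0)

/-- The product of the first `K` counter variables. -/
def fZ (K : ℕ) : Form := mono fX (total K)

/-- The guard of `e` holds at the preceding stage. -/
def guardF (e : Edge) : Form :=
  .fAnd (eqS (fbX 0) (mono fbX ([1], e.src)))
    (if e.pos = true then
      eqS (mono fbX ([cA e.ta, cB e.tb], 0)) (mono fbX ([cA e.tb, cB e.ta], 0))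
    else notOne (eqF (mono fbX ([cA e.ta, cB e.tb], 0)) (mono fbX ([cA e.tb, cB e.ta], 0))))

/-- The counters result from those of the preceding stage by firing `e`. The first three conjuncts
say that there is an accessible world, that the product `Z` of the variables lies below `c · □Z`,
and that `□` commutes with this product; the last one forces the infima of the individual
variables to be attained at a common world. -/
def stepF (K : ℕ) (e : Edge) : Form :=
  .fAnd (notOne (.fBox .fZero)) <| .fAnd (.fImp (fZ K) (.fMul fC (.fBox (fZ K)))) <|
    .fAnd (eqF (.fBox (fZ K)) (mono fbX (total K))) <| .fAnd (guardF e) <|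
      conj ((List.range K).map fun j => eqF (fX j) (mono fbX (e.upd j)))

/-- The counters are those of the initial configuration. -/
def leafF (K n : ℕ) : Form := conj ((List.range K).map fun j => eqF (fX j) (cpow (init n j)))

/-- The condition on each world: the total is strict, and the counters are initial or arise by
firing an edge. -/
def worldF (K : ℕ) (E : List Edge) (n : ℕ) : Form :=
  .fAnd (strict (fZ K)) (.fOr (leafF K n) (disj (E.map (stepF K))))

/-- The formula describing a run of the counter machine from input `n` to location `fin`, seen from
its last stage. The first two conjuncts make the value of `fC` the same at all accessible
worlds. -/
def psi (K : ℕ) (E : List Edge) (fin n : ℕ) : Form :=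
  .fAnd (.fImp fC (.fBox fC)) <| .fAnd (.fImp (.fDia fC) fC) <|
    .fAnd (eqS (fX 0) (mono fX ([1], fin))) <|
      .fAnd (worldF K E n) (.fBox (worldF K E n))

/-- The formula `¬ Δ ψ`, which fails somewhere exactly when `ψ` takes the value `1`
somewhere, provided `0 ≠ 1`. -/
def phi (K : ℕ) (E : List Edge) (fin n : ℕ) : Form := notOne (psi K E fin n)

end Formulas

/-! ### Truth conditions of the formulas -/

section Semantics

variable {α : Type} [FLew α] (M : KDModel α ℕ) (v : M.W)

theorem h_imp {φ ψ} : M.e v (.fImp φ ψ) = 1 ↔ M.e v φ ≤ M.e v ψ := by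
  rw [M.e_imp, himp_eq_one]

theorem h_and {φ ψ} : M.e v (.fAnd φ ψ) = 1 ↔ M.e v φ = 1 ∧ M.e v ψ = 1 := by
  rw [M.e_and, ← one_le', le_inf_iff, one_le', one_le']

theorem h_or (hc : FLew.isChain α) {φ ψ} :
    M.e v (.fOr φ ψ) = 1 ↔ M.e v φ = 1 ∨ M.e v ψ = 1 := by
  rw [M.e_or]
  constructor
  · intro h
    rcases hc (M.e v φ) (M.e v ψ) with h' | h'
    · rw [sup_eq_right.2 h'] at h; exact .inr h
    · rw [sup_eq_left.2 h'] at h; exact .inl h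
  · rintro (h | h)
    · exact one_le'.1 (h ▸ le_sup_left)
    · exact one_le'.1 (h ▸ le_sup_right)

theorem h_box {φ} : M.e v (.fBox φ) = 1 ↔ ∀ w, M.R v w → M.e w φ = 1 := by
  constructor
  · intro h w hw
    have := (M.e_box v φ).1 ⟨w, hw, rfl⟩
    rw [h] at this
    exact one_le'.1 this
  · intro h
    refine one_le'.1 ((M.e_box v φ).2 ?_)
    rintro _ ⟨w, hw, rfl⟩
    exact (h w hw).ge

theorem box_le {φ w} (h : M.R v w) : M.e v (.fBox φ) ≤ M.e w φ := (M.e_box v φ).1 ⟨w, h, rfl⟩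

theorem le_box {φ a} (h : ∀ w, M.R v w → a ≤ M.e w φ) : a ≤ M.e v (.fBox φ) := by
  refine (M.e_box v φ).2 ?_
  rintro _ ⟨w, hw, rfl⟩
  exact h w hw

theorem h_notOne (h01 : (⊥ : α) ≠ 1) {φ} : M.e v (notOne φ) = 1 ↔ M.e v φ ≠ 1 := by
  unfold notOne MDFormula.fNeg
  rw [h_imp, M.e_zero]
  by_cases h : M.e v φ = 1
  · rw [M.e_delta_one v φ h]
    simp only [h, ne_eq, not_true_eq_false, iff_false]
    exact fun h' => h01 (one_le'.1 h')
  · simp [M.e_delta_ne v φ h, h]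

theorem h_conj {l : List Form} : M.e v (conj l) = 1 ↔ ∀ φ ∈ l, M.e v φ = 1 := by
  induction l with
  | nil => simp [conj, M.e_one]
  | cons φ l ih =>
    have : conj (φ :: l) = .fAnd φ (conj l) := rfl
    rw [this, h_and, ih]; simp

theorem h_disj (hc : FLew.isChain α) (h01 : (⊥ : α) ≠ 1) {l : List Form} :
    M.e v (disj l) = 1 ↔ ∃ φ ∈ l, M.e v φ = 1 := by
  induction l with
  | nil => simp [disj, M.e_zero, h01]
  | cons φ l ih =>
    have : disj (φ :: l) = .fOr φ (disj l) := rfl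
    rw [this, h_or M v hc, ih]; simp

theorem h_eqF {φ ψ} : M.e v (eqF φ ψ) = 1 ↔ M.e v φ = M.e v ψ := by
  rw [eqF, h_and, h_imp, h_imp]
  exact ⟨fun h => le_antisymm h.1 h.2, fun h => ⟨h.le, h.ge⟩⟩

theorem h_strict (h01 : (⊥ : α) ≠ 1) {φ} :
    M.e v (strict φ) = 1 ↔ ¬ M.e v φ ≤ M.e v φ * M.e v fC := by
  rw [strict, h_notOne M v h01, Ne, h_imp, M.e_mul]

theorem e_cpow (d : ℕ) : M.e v (cpow d) = M.e v fC ^ d := by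
  induction d with
  | zero => simp [cpow, M.e_one]
  | succ d ih => rw [cpow, M.e_mul, ih, pow_succ]

theorem e_mono {g : ℕ → Form} {m : Mono} {x : ℕ → ℕ}
    (h : ∀ t ∈ m.1, M.e v (g t) = M.e v fC ^ x t) :
    M.e v (mono g m) = M.e v fC ^ m.val x := by
  obtain ⟨l, d⟩ := m
  induction l with
  | nil => simp [mono, e_cpow, Mono.val]
  | cons a l ih =>
    have e : mono g (a :: l, d) = .fMul (g a) (mono g (l, d)) := rfl
    rw [e, M.e_mul, h a (by simp), ih fun t ht => h t (List.mem_cons_of_mem _ ht), ← pow_add]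
    simp [Mono.val, add_assoc]

/-- The inequality version of `e_mono`. -/
theorem e_mono_le {g : ℕ → Form} {m : Mono} {x : ℕ → ℕ}
    (h : ∀ t ∈ m.1, M.e v (g t) ≤ M.e v fC ^ x t) :
    M.e v (mono g m) ≤ M.e v fC ^ m.val x := by
  obtain ⟨l, d⟩ := m
  induction l with
  | nil => simp [mono, e_cpow, Mono.val]
  | cons a l ih =>
    have e : mono g (a :: l, d) = .fMul (g a) (mono g (l, d)) := rfl
    rw [e, M.e_mul]
    refine (mul_mono' (h a (by simp)) (ih fun t ht => h t (List.mem_cons_of_mem _ ht))).trans ?_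
    rw [← pow_add]
    simp [Mono.val, add_assoc]

/-- For powers of `c`, the formula `eqS` identifies the exponents, in any algebra with `0 ≠ 1`. -/
theorem eqS_sound (h01 : (⊥ : α) ≠ 1) {φ ψ} {i j : ℕ} (hi : M.e v φ = M.e v fC ^ i)
    (hj : M.e v ψ = M.e v fC ^ j) (h : M.e v (eqS φ ψ) = 1) : i = j := by
  rw [eqS, h_and, h_eqF, h_strict M v h01, hi, hj] at h
  obtain ⟨h1, h2⟩ := h
  rw [← pow_succ] at h2
  rcases lt_trichotomy i j with h | h | h
  · exact absurd (h1.le.trans (pow_anti _ h)) h2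
  · exact h
  · refine absurd ?_ h2
    rw [pow_succ, h1, ← pow_succ, ← h1]
    exact pow_anti _ h

theorem eqS_complete (h01 : (⊥ : α) ≠ 1) {φ ψ} {i N : ℕ} (hN : M.e v fC ^ (N + 1) ≠ M.e v fC ^ N)
    (hiN : i ≤ N) (hi : M.e v φ = M.e v fC ^ i) (hj : M.e v ψ = M.e v fC ^ i) :
    M.e v (eqS φ ψ) = 1 := by
  rw [eqS, h_and, h_eqF, h_strict M v h01, hi, hj]
  exact ⟨rfl, fun h => hN (pow_collapse hiN h)⟩

end Semantics

/-! ### From refuting models to halting runs -/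

section Soundness

variable {α : Type} [FLew α] (M : KDModel α ℕ)

theorem total_update {K j : ℕ} (hj : j < K) (x : ℕ → ℕ) :
    (total K).val (Function.update x j (x j + 1)) = (total K).val x + 1 := by
  have h : ∀ x : ℕ → ℕ, (total K).val x = ∑ i ∈ Finset.range K, x i := fun x => by
    simp only [total, Mono.val, add_zero]; rfl
  rw [h, h, Finset.sum_update_of_mem (Finset.mem_range.2 hj),
    ← Finset.add_sum_erase _ _ (Finset.mem_range.2 hj), Finset.sdiff_singleton_eq_erase]
  omega

theorem guard_sound (h01 : (⊥ : α) ≠ 1) {K : ℕ} (hK : 2 ≤ K) {e : Edge} (hb : e.Bounded K) {v : M.W}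
    {x : ℕ → ℕ} (hx : ∀ j < K, M.e v (fbX j) = M.e v fC ^ x j) (h : M.e v (guardF e) = 1) :
    e.Guard x := by
  rw [guardF, h_and] at h
  obtain ⟨h1, h2⟩ := h
  have m1 : ∀ a b d, a < K → b < K →
      M.e v (mono fbX ([a, b], d)) = M.e v fC ^ (x a + x b + d) := by
    intro a b d ha hb
    rw [e_mono M v (x := x) (by simpa using ⟨hx a ha, hx b hb⟩)]
    simp [Mono.val]
  have m0 : M.e v (mono fbX ([1], e.src)) = M.e v fC ^ (x 1 + e.src) := by
    rw [e_mono M v (x := x) (by simpa using hx 1 (by omega))]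
    simp [Mono.val]
  refine ⟨eqS_sound M v h01 (hx 0 (by omega)) m0 h1, ?_⟩
  split_ifs at h2 with hp
  · simp only [hp, iff_true]
    simpa using eqS_sound M v h01 (m1 _ _ 0 hb.aa hb.bb) (m1 _ _ 0 hb.ab hb.ba) h2
  · refine iff_of_false (fun h => ?_) hp
    rw [h_notOne M v h01, Ne, h_eqF, m1 _ _ 0 hb.aa hb.bb, m1 _ _ 0 hb.ab hb.ba, h] at h2
    exact h2 rfl

/-- On a set `D` of worlds closed under accessibility, with `fC` constantly `c` and `worldF` true
throughout, each world whose total is not below all powers of `c` encodes a reachable counter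
valuation. The induction on the exponent `k` replaces an induction on the accessibility
relation, which need not be well-founded: one step lowers the exponent by one. -/
theorem world_sound (hc : FLew.isChain α) (h01 : (⊥ : α) ≠ 1)
    {E : List Edge} {K n : ℕ} (hK : 2 ≤ K) (hE : ∀ e ∈ E, e.Bounded K) {c : α} (D : M.W → Prop)
    (hD : ∀ v w, D v → M.R v w → D w) (hC : ∀ v, D v → M.e v fC = c)
    (hW : ∀ v, D v → M.e v (worldF K E n) = 1) (k : ℕ) :
    ∀ v, D v → ¬ M.e v (fZ K) ≤ c ^ k →
      ∃ m, Relation.ReflTransGen (LStep E) (init n) m ∧ ∀ j < K, M.e v (fX j) = c ^ m j := by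
  induction k with
  | zero => intro v _ h; exact absurd (le_one' _) (by simpa using h)
  | succ k ih =>
    intro v hv hz
    have hw := hW v hv
    rw [worldF, h_and, h_or M v hc, h_disj M v hc h01] at hw
    obtain ⟨-, hl | ⟨φ, hφ, hs⟩⟩ := hw
    · refine ⟨init n, .refl, fun j hj => ?_⟩
      rw [leafF, h_conj] at hl
      have := hl _ (List.mem_map.2 ⟨j, List.mem_range.2 hj, rfl⟩)
      rwa [h_eqF, e_cpow, hC v hv] at this
    · obtain ⟨e, he, rfl⟩ := List.mem_map.1 hφ
      simp only [stepF, h_and, h_notOne M v h01, h_imp, h_eqF, h_conj, M.e_mul, hC v hv] at hs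
      obtain ⟨s1, s2, s3, s4, s5⟩ := hs
      rw [Ne, h_box] at s1
      push Not at s1
      obtain ⟨w1, hw1, -⟩ := s1
      have hsucc : ∀ w : {w // M.R v w}, ∃ m, Relation.ReflTransGen (LStep E) (init n) m ∧
          ∀ j < K, M.e w (fX j) = c ^ m j := by
        rintro ⟨w, hw⟩
        refine ih w (hD v w hv hw) fun h => hz (s2.trans ?_)
        rw [pow_succ, mul_comm]
        exact mul_le_mul_r ((box_le M v hw).trans h) c
      choose m hr hm using hsucc
      have hzw : ∀ w : {w // M.R v w}, M.e w (fZ K) = c ^ (total K).val (m w) := fun w => by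
        have h0 := hC w (hD v _ hv w.2)
        rw [← h0]
        refine e_mono M _ fun t ht => ?_
        rw [h0]
        exact hm w t (by simpa [total] using ht)
      have htot : ∀ w, (total K).val (m w) < k := fun w => by
        by_contra! h
        apply hz
        rw [pow_succ, mul_comm]
        rw [mul_comm] at s2
        rw [mul_comm]
        exact s2.trans (mul_le_mul_r ((box_le M v w.2).trans ((hzw w).le.trans (pow_anti c h))) c)
      -- The successor with the largest total realizes all the infima simultaneously.
      obtain ⟨w0, hw0⟩ : ∃ w0, ∀ w, (total K).val (m w) ≤ (total K).val (m w0) := by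
        have : Nonempty {w // M.R v w} := ⟨⟨w1, hw1⟩⟩
        have hfin : (Set.range fun w => (total K).val (m w)).Finite :=
          (Set.finite_lt_nat k).subset (by rintro _ ⟨w, rfl⟩; exact htot w)
        obtain ⟨_, ⟨w0, rfl⟩, h⟩ := Set.exists_max_image _ id hfin (Set.range_nonempty _)
        exact ⟨w0, fun w => h _ ⟨w, rfl⟩⟩
      have hbz : M.e v (.fBox (fZ K)) = c ^ (total K).val (m w0) :=
        le_antisymm ((box_le M v w0.2).trans (hzw w0).le)
          (le_box M v fun w hw => (pow_anti c (hw0 ⟨w, hw⟩)).trans (hzw ⟨w, hw⟩).ge)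
      have hbx : ∀ j < K, M.e v (fbX j) = c ^ m w0 j := by
        have hle : ∀ (w) (j) (_ : j < K), M.e v (fbX j) ≤ c ^ m w j := fun w j hj =>
          (box_le M v w.2).trans (hm w j hj).le
        intro j hj
        refine le_antisymm (hle w0 j hj) (le_box M v fun w hw => ?_)
        rw [hm ⟨w, hw⟩ j hj]
        refine pow_anti c ?_
        -- A larger counter at another successor would, as `□` commutes with the product, push
        -- the total at `w0` below its product with `c`.
        by_contra! hlt
        have hst := hW w0 (hD v _ hv w0.2)
        rw [worldF, h_and, h_strict M _ h01, hC w0 (hD v _ hv w0.2), hzw, ← pow_succ] at hst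
        apply hst.1
        rw [← hbz, s3, ← total_update hj, ← hC v hv]
        refine e_mono_le M v fun t ht => ?_
        have ht : t < K := by simpa [total] using ht
        rw [hC v hv]
        by_cases htj : t = j
        · subst htj
          rw [Function.update_self]
          exact (hle ⟨w, hw⟩ t ht).trans (pow_anti c hlt)
        · rw [Function.update_of_ne htj]
          exact hle w0 t ht
      have hbx' : ∀ j < K, M.e v (fbX j) = M.e v fC ^ m w0 j := by rwa [hC v hv]
      refine ⟨e.next (m w0),
        (hr w0).tail ⟨e, he, guard_sound M h01 hK (hE e he) hbx' s4, rfl⟩, fun j hj => ?_⟩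
      have := s5 _ (List.mem_map.2 ⟨j, List.mem_range.2 hj, rfl⟩)
      rw [h_eqF] at this
      rw [this, e_mono M v fun t ht => hbx' t ((hE e he).upd j hj t ht), hC v hv]
      rfl

/-- A transitive model refuting `phi` yields a halting run. Weak archimedeanity excludes that the
total at the refuting world lies below all powers of `c`. -/
theorem sound (hc : FLew.isChain α) (hwa : FLew.weaklyArchimedean α) (hT : M.IsTrans)
    {E : List Edge} {K fin n : ℕ} (hK : 2 ≤ K) (hE : ∀ e ∈ E, e.Bounded K) {v : M.W}
    (h : M.e v (phi K E fin n) ≠ 1) :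
    ∃ x, Relation.ReflTransGen (LStep E) (init n) x ∧ x 0 = x 1 + fin := by
  -- In the one-element algebra every formula has value `1`.
  have h01 : (⊥ : α) ≠ 1 := fun h0 => h (one_le'.1 (h0 ▸ bot_le))
  rw [phi, Ne, h_notOne M v h01, not_not] at h
  simp only [psi, h_and, h_imp] at h
  obtain ⟨h1, h2, h3, h4, h5⟩ := h
  rw [h_box] at h5
  let D : M.W → Prop := fun w => w = v ∨ M.R v w
  have hC : ∀ w, D w → M.e w fC = M.e v fC := by
    rintro w (rfl | hw)
    · rfl
    · exact le_antisymm (((M.e_dia v fC).1 ⟨w, hw, rfl⟩).trans h2) (h1.trans (box_le M v hw))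
  have hW : ∀ w, D w → M.e w (worldF K E n) = 1 := by
    rintro w (rfl | hw)
    · exact h4
    · exact h5 w hw
  have hD : ∀ a b, D a → M.R a b → D b := by
    rintro a b (rfl | ha) hb
    · exact .inr hb
    · exact .inr (hT _ _ _ ha hb)
  obtain ⟨N, hN⟩ : ∃ N, ¬ M.e v (fZ K) ≤ M.e v fC ^ N := by
    by_contra! hall
    rw [worldF, h_and, h_strict M v h01] at h4
    exact h4.1 (hwa _ _ hall).ge
  obtain ⟨m, hr, hm⟩ := world_sound M hc h01 hK hE D hD hC hW N v (.inl rfl) hN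
  refine ⟨m, hr, eqS_sound M v h01 (hm 0 (by omega)) ?_ h3⟩
  rw [e_mono M v (x := m) (by simpa using hm 1 (by omega))]
  simp [Mono.val]

end Soundness

/-! ### From halting runs to finite refuting models -/

section Completeness

variable {α : Type} [FLew α]

open Classical in
/-- Evaluation of formulas in a finite frame, with given values of the variables. -/
noncomputable def ev {W : Type} [Fintype W] (R : W → W → Prop) (val : W → ℕ → α) :
    Form → W → α
  | .var j, v => val v j
  | .fZero, _ => ⊥
  | .fOne, _ => 1
  | .fAnd φ ψ, v => ev R val φ v ⊓ ev R val ψ v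
  | .fOr φ ψ, v => ev R val φ v ⊔ ev R val ψ v
  | .fMul φ ψ, v => ev R val φ v * ev R val ψ v
  | .fImp φ ψ, v => FLew.himp (ev R val φ v) (ev R val ψ v)
  | .fBox φ, v => (Finset.univ.filter (R v)).inf (ev R val φ)
  | .fDia φ, v => (Finset.univ.filter (R v)).sup (ev R val φ)
  | .fDelta φ, v => if ev R val φ v = 1 then 1 else ⊥

/-- The Kripke model on a finite frame with given values of the variables. Finiteness of the frame
makes all the infima and suprema exist. -/
noncomputable def finModel {W : Type} [Fintype W] [Nonempty W] (R : W → W → Prop)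
    (val : W → ℕ → α) : KDModel α ℕ where
  W := W
  nonempty := inferInstance
  R := R
  e v φ := ev R val φ v
  e_zero _ := rfl
  e_one _ := rfl
  e_and _ _ _ := rfl
  e_or _ _ _ := rfl
  e_mul _ _ _ := rfl
  e_imp _ _ _ := rfl
  e_box v φ := by
    constructor
    · rintro _ ⟨w, hw, rfl⟩
      exact Finset.inf_le (by simpa using hw)
    · intro a ha
      exact Finset.le_inf fun w hw => ha ⟨w, by simpa using hw, rfl⟩
  e_dia v φ := by
    constructor
    · rintro _ ⟨w, hw, rfl⟩
      exact Finset.le_sup (f := ev R val φ) (by simpa using hw)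
    · intro a ha
      exact Finset.sup_le fun w hw => ha ⟨w, by simpa using hw, rfl⟩
  e_delta_one v φ h := by simp [ev, h]
  e_delta_ne v φ h := by simp [ev, h]

theorem exists_run {β : Type} {r : β → β → Prop} {a b : β} (h : Relation.ReflTransGen r a b) :
    ∃ (T : ℕ) (m : ℕ → β), m 0 = a ∧ m T = b ∧ ∀ i < T, r (m i) (m (i + 1)) := by
  induction h with
  | refl => exact ⟨0, fun _ => a, rfl, rfl, by simp⟩
  | @tail b c _ hs ih =>
    obtain ⟨T, m, h0, hT, hm⟩ := ih
    refine ⟨T + 1, fun i => if i ≤ T then m i else c, by simpa, by simp, fun i hi => ?_⟩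
    rcases Nat.lt_succ_iff_lt_or_eq.1 hi with h | rfl
    · simpa [h.le, Nat.succ_le_of_lt h] using hm i h
    · simpa [hT] using hs

/-- The finite chain `w 0, …, w T` in which each world sees exactly those of smaller index, with
prescribed values of the variables. -/
theorem exists_linear_model (T : ℕ) (val : ℕ → ℕ → α) :
    ∃ (M : KDModel α ℕ) (w : ℕ → M.W), M.IsTrans ∧ M.IsFinite ∧
      (∀ i ≤ T, ∀ u, M.R (w i) u ↔ ∃ k < i, u = w k) ∧
      ∀ i ≤ T, ∀ j, M.e (w i) (.var j) = val i j := by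
  refine ⟨finModel (W := Fin (T + 1)) (fun i j => j < i) fun i => val i, fun i => Fin.ofNat _ i,
    fun a b d hab hbd => lt_trans hbd hab, inferInstanceAs (Finite (Fin (T + 1))), ?_, ?_⟩
  · intro i hi (u : Fin (T + 1))
    constructor
    · intro (h : u < Fin.ofNat _ i)
      refine ⟨u, ?_, Fin.ext ?_⟩
      · have := Fin.lt_def.1 h
        rwa [Fin.val_ofNat, Nat.mod_eq_of_lt (by omega)] at this
      · rw [Fin.val_ofNat, Nat.mod_eq_of_lt u.2]
    · rintro ⟨k, hk, rfl⟩
      refine Fin.lt_def.2 ?_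
      rw [Fin.val_ofNat, Fin.val_ofNat, Nat.mod_eq_of_lt (by omega), Nat.mod_eq_of_lt (by omega)]
      exact hk
  · intro i hi j
    change val (Fin.ofNat (T + 1) i : Fin (T + 1)) j = _
    rw [Fin.val_ofNat, Nat.mod_eq_of_lt (by omega)]

/-- A run of length `T`, read off along a chain of worlds as powers of `c`, refutes `phi`. Distinct
exponents up to `N` must give distinct powers, and guards compare sums of two counters, hence
the bound on `N`. -/
theorem complete {E : List Edge} {K fin n : ℕ} (hK : 2 ≤ K) (hE : ∀ e ∈ E, e.Bounded K)
    {T : ℕ} {m : ℕ → ℕ → ℕ} (h0 : m 0 = init n) (hm : ∀ i < T, LStep E (m i) (m (i + 1)))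
    (hT : m T 0 = m T 1 + fin) {c : α} {N : ℕ} (hN : 2 * (total K).val (m T) ≤ N)
    (hc : c ^ (N + 1) ≠ c ^ N) :
    ∃ M : KDModel α ℕ, M.IsTrans ∧ M.IsFinite ∧ ∃ v : M.W, M.e v (phi K E fin n) ≠ 1 := by
  have h01 : (⊥ : α) ≠ 1 := fun h => hc <| by
    have : ∀ a : α, a = 1 := fun a => one_le'.1 (h ▸ bot_le)
    rw [this (c ^ (N + 1)), this (c ^ N)]
  have hinj : ∀ i j, i ≤ N → j ≤ N → c ^ i = c ^ j → i = j := by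
    have : ∀ i j, j ≤ N → i < j → c ^ i ≠ c ^ j := fun i j hj hij h =>
      hc (pow_collapse (hij.le.trans hj) (by rw [← pow_succ, h]; exact pow_anti c hij))
    intro i j hi hj h
    rcases lt_trichotomy i j with h' | h' | h'
    · exact absurd h (this i j hj h')
    · exact h'
    · exact absurd h.symm (this j i hi h')
  have hsum : ∀ x : ℕ → ℕ, (total K).val x = ∑ i ∈ Finset.range K, x i := fun x => by
    simp only [total, Mono.val, add_zero]; rfl
  have hstep : ∀ i < T, ∀ j, m i j ≤ m (i + 1) j := fun i hi j => by
    obtain ⟨e, -, -, h⟩ := hm i hi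
    rw [h]; exact le_next e _ j
  have hmon : ∀ i k, i ≤ k → k ≤ T → ∀ j, m i j ≤ m k j := by
    intro i k hik
    induction hik with
    | refl => intro _ _; exact le_rfl
    | step _ ih => intro hk j; exact (ih (by omega) j).trans (hstep _ hk j)
  have htmon : ∀ i k, i ≤ k → k ≤ T → (total K).val (m i) ≤ (total K).val (m k) := by
    intro i k hik hk
    rw [hsum, hsum]
    exact Finset.sum_le_sum fun j _ => hmon i k hik hk j
  have htlt : ∀ i < T, (total K).val (m i) < (total K).val (m (i + 1)) := by
    intro i hi
    rw [hsum, hsum]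
    refine Finset.sum_lt_sum (fun j _ => hstep i hi j) ⟨0, by simp; omega, ?_⟩
    obtain ⟨e, -, -, h⟩ := hm i hi
    rw [h]; exact next_zero e _
  have hbd : ∀ i ≤ T, ∀ j < K, m i j ≤ (total K).val (m T) := fun i hi j hj => by
    rw [hsum]
    exact (hmon i T hi le_rfl j).trans
      (Finset.single_le_sum (f := m T) (fun _ _ => Nat.zero_le _) (Finset.mem_range.2 hj))
  obtain ⟨M, w, htr, hfin, hR, hV⟩ := exists_linear_model T
    fun i k => (Nat.casesOn k c fun j => c ^ m i j : α)
  have eC : ∀ i, i ≤ T → M.e (w i) fC = c := fun i hi => hV i hi 0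
  have eX : ∀ i, i ≤ T → ∀ j, M.e (w i) (fX j) = c ^ m i j := fun i hi j => hV i hi (j + 1)
  have eZ : ∀ i, i ≤ T → M.e (w i) (fZ K) = c ^ (total K).val (m i) := fun i hi => by
    rw [← eC i hi]
    exact e_mono M _ fun t _ => by rw [eX i hi, eC i hi]
  -- The infimum over the earlier stages is attained at the immediately preceding one.
  have ebX : ∀ i, i < T → ∀ j, M.e (w (i + 1)) (fbX j) = c ^ m i j := by
    intro i hi j
    refine le_antisymm ((box_le M _ ((hR _ hi _).2 ⟨i, by omega, rfl⟩)).trans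
      (eX i hi.le j).le) (le_box M _ fun u hu => ?_)
    obtain ⟨k, hk, rfl⟩ := (hR _ hi _).1 hu
    rw [eX k (by omega)]
    exact pow_anti c (hmon k i (by omega) hi.le j)
  have ebZ : ∀ i, i < T → M.e (w (i + 1)) (.fBox (fZ K)) = c ^ (total K).val (m i) := by
    intro i hi
    refine le_antisymm ((box_le M _ ((hR _ hi _).2 ⟨i, by omega, rfl⟩)).trans
      (eZ i hi.le).le) (le_box M _ fun u hu => ?_)
    obtain ⟨k, hk, rfl⟩ := (hR _ hi _).1 hu
    rw [eZ k (by omega)]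
    exact pow_anti c (htmon k i (by omega) hi.le)
  have hW : ∀ i, i ≤ T → M.e (w i) (worldF K E n) = 1 := by
    intro i hi
    rw [worldF, h_and, h_strict M _ h01, M.e_or]
    refine ⟨?_, ?_⟩
    · rw [eZ i hi, eC i hi]
      refine fun h => hc (pow_collapse ?_ h)
      have := htmon i T (by omega) le_rfl
      omega
    · rcases i with _ | i
      · refine one_le'.1 (le_trans (one_le'.2 ?_) le_sup_left)
        rw [leafF, h_conj]
        intro φ hφ
        obtain ⟨j, -, rfl⟩ := List.mem_map.1 hφ
        rw [h_eqF, e_cpow, eC 0 hi, eX 0 hi, h0]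
      · have hi' : i < T := by omega
        obtain ⟨e, he, hg, hn⟩ := hm i hi'
        have hb := hE e he
        have hs : M.e (w (i + 1)) (stepF K e) = 1 := by
          have m1 : ∀ a b d, M.e (w (i + 1)) (mono fbX ([a, b], d)) =
              c ^ (m i a + m i b + d) := by
            intro a b d
            rw [e_mono M _ (x := m i) fun t _ => by rw [ebX i hi' t, eC _ hi]]
            simp [Mono.val, eC _ hi]
          have b1 : ∀ a b, a < K → b < K → m i a + m i b ≤ N := by
            intro a b ha hb
            have := hbd i hi'.le a ha
            have := hbd i hi'.le b hb
            omega
          simp only [stepF, h_and, h_notOne M _ h01, h_imp, h_eqF, h_conj, M.e_mul, eC _ hi]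
          refine ⟨?_, ?_, ?_, ?_, ?_⟩
          · intro h
            rw [h_box] at h
            have := h _ ((hR _ hi _).2 ⟨i, by omega, rfl⟩)
            rw [M.e_zero] at this
            exact h01 this
          · rw [eZ _ hi, ebZ i hi', mul_comm, ← pow_succ]
            exact pow_anti c (htlt i hi')
          · rw [ebZ i hi', e_mono M _ (x := m i) fun t _ => by rw [ebX i hi' t, eC _ hi], eC _ hi]
          · rw [guardF, h_and]
            refine ⟨?_, ?_⟩
            · refine eqS_complete M _ h01 (i := m i 0) (N := N) (by rwa [eC _ hi])
                ((b1 0 0 (by omega) (by omega)).trans' (by omega)) (by rw [ebX i hi' 0, eC _ hi]) ?_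
              rw [e_mono M _ (x := m i) fun t _ => by rw [ebX i hi' t, eC _ hi], hg.1, eC _ hi]
              simp [Mono.val]
            · split_ifs with hp
              · refine eqS_complete M _ h01 (N := N) (by rwa [eC _ hi]) (b1 _ _ hb.aa hb.bb)
                  (by rw [m1, eC _ hi, add_zero]) ?_
                rw [m1, eC _ hi, ← hg.2.2 hp, add_zero]
              · rw [h_notOne M _ h01, Ne, h_eqF, m1, m1]
                intro h
                exact hp (hg.2.1 (hinj _ _ (b1 _ _ hb.aa hb.bb) (b1 _ _ hb.ab hb.ba) h))
          · intro φ hφ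
            obtain ⟨j, -, rfl⟩ := List.mem_map.1 hφ
            rw [h_eqF, e_mono M _ (x := m i) fun t _ => by rw [ebX i hi' t, eC _ hi], eC _ hi, eX _ hi, hn]; rfl
        have hd : ∀ l : List Form, stepF K e ∈ l →
            M.e (w (i + 1)) (disj l) = 1 := by
          intro l hl
          induction l with
          | nil => simp at hl
          | cons φ l ih =>
            have hcons : disj (φ :: l) = .fOr φ (disj l) := rfl
            rw [hcons, M.e_or]
            rcases List.mem_cons.1 hl with rfl | hl
            · exact one_le'.1 (le_trans hs.ge le_sup_left)
            · exact one_le'.1 (le_trans (ih hl).ge le_sup_right)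
        exact one_le'.1 (le_trans (hd _ (List.mem_map.2 ⟨e, he, rfl⟩)).ge le_sup_right)
  have hall : ∀ u, M.R (w T) u → ∃ k ≤ T, u = w k := fun u hu => by
    obtain ⟨k, hk, rfl⟩ := (hR T le_rfl u).1 hu
    exact ⟨k, hk.le, rfl⟩
  refine ⟨M, htr, hfin, w T, ?_⟩
  rw [phi, Ne, h_notOne M _ h01, not_not]
  simp only [psi, h_and, h_imp]
  refine ⟨?_, ?_, ?_, hW T le_rfl, (h_box M _).2 fun u hu => ?_⟩
  · refine le_box M _ fun u hu => ?_
    obtain ⟨k, hk, rfl⟩ := hall u hu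
    rw [eC T le_rfl, eC k hk]
  · refine (M.e_dia _ fC).2 ?_
    rintro _ ⟨u, hu, rfl⟩
    obtain ⟨k, hk, rfl⟩ := hall u hu
    rw [eC T le_rfl, eC k hk]
  · refine eqS_complete M _ h01 (i := m T 0) (N := N) (by rwa [eC T le_rfl])
      ((hbd T le_rfl 0 (by omega)).trans (by omega)) (by rw [eX T le_rfl, eC T le_rfl]) ?_
    rw [e_mono M _ (x := m T) fun t _ => by rw [eX T le_rfl, eC T le_rfl], hT, eC T le_rfl]
    simp [Mono.val]
  · obtain ⟨k, hk, rfl⟩ := hall u hu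
    exact hW k hk

end Completeness

/-! ### The reduction from the halting problem -/

section Computability

open MDFormula

/-- A sequence of formulas whose codes form a primitive recursive function. -/
def Uniform (g : ℕ → Form) : Prop := Primrec fun n => codeD (g n)

namespace Uniform

theorem const (φ : Form) : Uniform fun _ => φ := Primrec.const _

theorem tag {g : ℕ → ℕ} (k : ℕ) (hg : Primrec g) : Primrec fun n => Nat.pair k (g n) :=
  Primrec₂.natPair.comp (Primrec.const k) hg

variable {f g : ℕ → Form}

theorem and (hf : Uniform f) (hg : Uniform g) : Uniform fun n => .fAnd (f n) (g n) :=
  tag 3 (Primrec₂.natPair.comp hf hg)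

theorem or (hf : Uniform f) (hg : Uniform g) : Uniform fun n => .fOr (f n) (g n) :=
  tag 4 (Primrec₂.natPair.comp hf hg)

theorem mul (hf : Uniform f) (hg : Uniform g) : Uniform fun n => .fMul (f n) (g n) :=
  tag 5 (Primrec₂.natPair.comp hf hg)

theorem imp (hf : Uniform f) (hg : Uniform g) : Uniform fun n => .fImp (f n) (g n) :=
  tag 6 (Primrec₂.natPair.comp hf hg)

theorem box (hf : Uniform f) : Uniform fun n => .fBox (f n) := tag 7 hf

theorem delta (hf : Uniform f) : Uniform fun n => .fDelta (f n) := tag 9 hf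

theorem notOne (hf : Uniform f) : Uniform fun n => notOne (f n) := hf.delta.imp (const _)

theorem eqF (hf : Uniform f) (hg : Uniform g) : Uniform fun n => eqF (f n) (g n) :=
  (hf.imp hg).and (hg.imp hf)

theorem cpow : Uniform cpow := by
  have : Primrec (Nat.rec (codeD .fOne) fun _ r => Nat.pair 5 (Nat.pair r (codeD fC)) : ℕ → ℕ) :=
    Primrec.nat_rec₁ _ <| Primrec₂.natPair.comp₂ (Primrec₂.const 5)
      (Primrec₂.natPair.comp₂ Primrec₂.right (Primrec₂.const _))
  refine this.of_eq fun n => ?_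
  induction n with
  | zero => rfl
  | succ n ih => simp only [ih]; rfl

theorem conj {ι : Type} (l : List ι) {g : ι → ℕ → Form} (h : ∀ i, Uniform (g i)) :
    Uniform fun n => conj (l.map fun i => g i n) := by
  induction l with
  | nil => exact const _
  | cons i l ih => exact (h i).and ih

theorem leafF (K : ℕ) : Uniform (leafF K) := by
  refine conj _ fun j => (const _).eqF ?_
  by_cases hj : j = 2
  · simpa only [init, hj, if_true] using cpow
  · simpa only [init, hj, if_false] using const _

theorem phi (K : ℕ) (E : List Edge) (fin : ℕ) : Uniform (phi K E fin) := by
  have hw : Uniform (worldF K E) := (const _).and ((leafF K).or (const _))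
  exact ((const _).and <| (const _).and <| (const _).and <| hw.and hw.box).notOne

end Uniform

/-- Some counter machine halts, on input the number of a code `c`, exactly when `c` halts on
input `0`. -/
theorem exists_machine : ∃ (E : List Edge) (fin : ℕ), ∀ c : Nat.Partrec.Code,
    (c.eval 0).Dom ↔
      ∃ x, Relation.ReflTransGen (LStep E) (init (Encodable.encode c)) x ∧ x 0 = x 1 + fin := by
  let g : ℕ →. ℕ := fun a => (Denumerable.ofNat Nat.Partrec.Code a).eval 0
  have hg : Partrec g :=
    Nat.Partrec.Code.eval_part.comp (Computable.ofNat _) (Computable.const 0)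
  obtain ⟨P, hP⟩ := impl_partrec (Nat.Partrec'.part_iff₁.2 hg) (fun _ => 0) 1 2
    (by simp) (by simp) (by simp)
  refine ⟨P.flat 0, P.size, fun c => ?_⟩
  rw [reach_low, reach_iff_exec]
  obtain ⟨h1, h2⟩ := hP (input (Encodable.encode c)) (Encodable.encode c ::ᵥ .nil)
    (by intro i; fin_cases i; rfl)
  have e : g (List.Vector.head (Encodable.encode c ::ᵥ .nil)) = c.eval 0 := by
    simp [g]
  change (g _).Dom → _ at h2
  change ∀ s' : ℕ → ℕ, _ → s' 1 ∈ g _ ∧ _ at h1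
  rw [e] at h1 h2
  exact ⟨h2, fun ⟨s', hs⟩ => Part.dom_iff_mem.2 ⟨_, (h1 s' hs).1⟩⟩

/-- A set of formulas to which halting reduces through the complement is undecidable. -/
theorem undecidable_of_reduction {E : List Edge} {K fin : ℕ} {S : Set Form}
    (h : ∀ c : Nat.Partrec.Code, (c.eval 0).Dom ↔ phi K E fin (Encodable.encode c) ∉ S) :
    ¬ ∃ f : ℕ → Bool, Computable f ∧ ∀ φ, f (codeD φ) = true ↔ φ ∈ S := by
  classical
  rintro ⟨f, hf, hS⟩
  refine ComputablePred.halting_problem 0 ⟨inferInstance, ?_⟩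
  refine (Primrec.not.to_comp.comp
    (hf.comp ((Uniform.phi K E fin).to_comp.comp Computable.encode))).of_eq fun c => ?_
  rw [Bool.eq_iff_iff, decide_eq_true_iff]
  change _ ↔ (c.eval 0).Dom
  rw [h, ← hS]
  simp

/-- A halting run gives a finite countermodel over some member of the class. The total of the last
valuation determines how far from contractive that member has to be. -/
theorem exists_countermodel_of_run {I : Type} {A : I → Type} [∀ i, FLew (A i)]
    (hnc : ∀ n : ℕ, ∃ i, ¬ FLew.contractive (A i) n) {E : List Edge} {K fin n : ℕ} (hK : 2 ≤ K)
    (hE : ∀ e ∈ E, e.Bounded K)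
    (h : ∃ x, Relation.ReflTransGen (LStep E) (init n) x ∧ x 0 = x 1 + fin) :
    ∃ (i : I) (M : KDModel (A i) ℕ), M.IsTrans ∧ M.IsFinite ∧
      ∃ v : M.W, M.e v (phi K E fin n) ≠ 1 := by
  obtain ⟨x, hx, hfin⟩ := h
  obtain ⟨T, m, h0, rfl, hm⟩ := exists_run hx
  obtain ⟨i, hi⟩ := hnc (2 * (total K).val (m T))
  simp only [FLew.contractive, not_forall] at hi
  obtain ⟨c, hc⟩ := hi
  exact ⟨i, complete hK hE h0 hm hfin le_rfl hc⟩

end Computability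

end DeltaUndec

/-- **Lemma.** For a class `𝒜` of weakly-archimedean linearly ordered FL_ew-algebras with
non-`n`-contractive members for every `n`, in the language with `Δ` the set of formulas
valid in all transitive safe `𝒜`-Kripke models is undecidable, and so is the set of
formulas valid in all finite transitive `𝒜`-Kripke models. -/
theorem delta_validity_undecidable
    {I : Type} (A : I → Type) [inst : ∀ i, FLew (A i)]
    (hchain : ∀ i, FLew.isChain (A i))
    (hwa : ∀ i, FLew.weaklyArchimedean (A i))
    (hnc : ∀ n : ℕ, ∃ i, ¬ FLew.contractive (A i) n) :
    (¬ ∃ f : ℕ → Bool, Computable f ∧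
      ∀ φ : MDFormula ℕ,
        (f (codeD φ) = true ↔
          ∀ (i : I) (M : KDModel (A i) ℕ), M.IsTrans → ∀ v : M.W, M.e v φ = 1)) ∧
    (¬ ∃ f : ℕ → Bool, Computable f ∧
      ∀ φ : MDFormula ℕ,
        (f (codeD φ) = true ↔
          ∀ (i : I) (M : KDModel (A i) ℕ), M.IsTrans → M.IsFinite →
            ∀ v : M.W, M.e v φ = 1)) := by
  open DeltaUndec in
  obtain ⟨E, fin, hM⟩ := exists_machine
  obtain ⟨K, hK, hE⟩ := exists_bound E
  refine ⟨undecidable_of_reduction (E := E) (K := K) (fin := fin) (S := {φ | ∀ (i : I) (M : KDModel (A i) ℕ),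
      M.IsTrans → ∀ v : M.W, M.e v φ = 1}) fun c => (hM c).trans ⟨fun h hv => ?_, fun h => ?_⟩,
    undecidable_of_reduction (E := E) (K := K) (fin := fin) (S := {φ | ∀ (i : I) (M : KDModel (A i) ℕ),
      M.IsTrans → M.IsFinite → ∀ v : M.W, M.e v φ = 1})
      fun c => (hM c).trans ⟨fun h hv => ?_, fun h => ?_⟩⟩
  · obtain ⟨i, M, hT, -, v, hne⟩ := exists_countermodel_of_run hnc hK hE h
    exact hne (hv i M hT v)
  · simp only [Set.mem_ofPred_eq, not_forall] at h
    obtain ⟨i, M, hT, v, hne⟩ := h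
    exact sound M (hchain i) (hwa i) hT hK hE hne
  · obtain ⟨i, M, hT, hF, v, hne⟩ := exists_countermodel_of_run hnc hK hE h
    exact hne (hv i M hT hF v)
  · simp only [Set.mem_ofPred_eq, not_forall] at h
    obtain ⟨i, M, hT, -, v, hne⟩ := h
    exact sound M (hchain i) (hwa i) hT hK hE hne
end
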